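/- Let Y be a block subspace of X_iw and ε > 0. Then there exists an array of block sequences (x_j^{(i)})_j, i ∈ ℕ, in Y such that for all k, l ∈ ℕ, all scalars (a_{i,j})_{1≤i≤k,1≤j≤l}, and every plegma (s_i)_{i=1}^k of l-tuples of naturals with min s_1 ≥ max{k,l}, one has max_{1≤i≤k} Σ_{j=1}^l |a_{i,j}| ≤ ‖Σ_{i=1}^k Σ_{j=1}^l a_{i,j} x_{s_i(j)}^{(i)}‖ ≤ (1+ε)·max_{1≤i≤k} Σ_{j=1}^l |a_{i,j}|. -/

import Mathlib

/-!
Functionals of `W_iw` with small weight are small on suitable vectors of every block subspace, and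
this makes rows built with different weights behave like `ℓ₁` inside a row and like `c₀` across
rows.

*Lower `ℓ₁` estimate.* Every normalized block sequence `y` has a subsequence with
`‖∑ a_k y_k‖ ≥ (1 / (4 m_j)) ∑ a_k` for `a_k ≥ 0` on `S_{n_j}`-admissible sets (`lower_l1`): if
the weights of the norming functionals are unbounded, the functionals are used as they are;
otherwise their weights may be taken constant and the functionals are merged piece by piece
(`lower_of_pieces`).

*Vectors with good estimates.* Fix `C > 1` close to `1`.  On a special convex combination
(`exists_scc`) of successive vectors of norm at most one, a functional of small weight `w` is at
most `1 / w + η` (`small_weight_le`).  If the norm of such a combination always dropped below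
`1 / C`, then multiplying by `C` and iterating would produce vectors of norm at most one
with coefficients summing up to at least `C ^ p` on an `S_{np}` set, contradicting the lower estimate
because `C₀ ^ n_j / m_j → ∞` for every `C₀ > 1` (`exists_good`).  Hence the subspace contains a sequence
`z_k` with norms at most `C`, normed by very fast growing functionals `f_k`, such that every
functional of weight `w` exceeds `C / w + 1 / (k + 1)` on at most one `z_k` (`exists_fastSeq`).

*The array.* The vectors in row `i` are `m_j ∑_{k ∈ F} c_k z_k` with `j = j_i` and special convex
combinations `c` of order `n_j - 1` (`exists_isVec`), all supported on disjoint sets `F`; the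
`m_{j_i}` grow rapidly.  For the lower bound, the sum of `l` such vectors in a row, with `l` at most
the minimum of the supports, is `S_{n_j}`-admissible in the `z_k`, so `(1 / m_j) ∑ ± f_k` is in the
norming set (`exists_lower`).  The upper bound is proved by induction on the functional
(`abs_ev_array_le`): if the weight is `w`, the rows with `m_{j_i} ≤ w` contribute about
`∑ m_{j_i} / w`, a geometric sum dominated by its last term; on the other rows the functional acts,
up to a small error, like `1 / w` times a single one of its pieces, because the pieces following
the first relevant one have very large weights.
-/

open Filter Topology
open scoped ENNReal

noncomputable section

/-! ### Abstract Banach space notions -/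

section Abstract

variable {X : Type*} [NormedAddCommGroup X] [NormedSpace ℝ X]

/-- A sequence is normalized if every term has norm one. -/
def Normalized (x : ℕ → X) : Prop := ∀ i, ‖x i‖ = 1

/-- A sequence is weakly null if it tends to `0` in the weak topology. -/
def WeaklyNull (x : ℕ → X) : Prop :=
  ∀ f : X →L[ℝ] ℝ, Tendsto (fun i => f (x i)) atTop (𝓝 (0 : ℝ))

end Abstract

/-- The ℓ₁ norm of finite coefficient vectors (the norms of finite linear
combinations of the unit vector basis of ℓ₁). -/
def l1Norm : ∀ m : ℕ, (Fin m → ℝ) → ℝ := fun _ a => ∑ i, |a i|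

/-- The sup norm of finite coefficient vectors (the norms of finite linear
combinations of the unit vector basis of c₀). -/
def supNorm : ∀ m : ℕ, (Fin m → ℝ) → ℝ := fun _ a => ⨆ i, |a i|

/-- The ℓ_p norm of finite coefficient vectors, `1 ≤ p < ∞`. -/
def lpNormFin (p : ℝ) : ∀ m : ℕ, (Fin m → ℝ) → ℝ := fun _ a => (∑ i, |a i| ^ p) ^ (1 / p)

/-- The ℓ_q norms of finite coefficient vectors, `q ∈ [1,∞]`, where `q = ∞`
corresponds to `c₀`. -/
def finLqNorm (q : ℝ≥0∞) : ∀ m : ℕ, (Fin m → ℝ) → ℝ := fun m a =>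
  if q = ⊤ then supNorm m a else lpNormFin q.toReal m a

/-- The family of seminorms `ν` (of finite combinations of a sequence in a seminormed
space) is `C`-equivalent to the family `μ`:  there are `A B > 0` with `A * B ≤ C` and
`(1/A) * μ ≤ ν ≤ B * μ`. -/
def NormFamEquiv (C : ℝ) (μ ν : ∀ m : ℕ, (Fin m → ℝ) → ℝ) : Prop :=
  ∃ A B : ℝ, 0 < A ∧ 0 < B ∧ A * B ≤ C ∧
    ∀ (m : ℕ) (a : Fin m → ℝ), (1 / A) * μ m a ≤ ν m a ∧ ν m a ≤ B * μ m a

section Abstract2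

variable {X : Type*} [NormedAddCommGroup X] [NormedSpace ℝ X]

/-- The sequence `x` generates the spreading model whose finite-combination
seminorms are given by the family `ν`. -/
def GeneratesSpreadingModel (x : ℕ → X) (ν : ∀ m : ℕ, (Fin m → ℝ) → ℝ) : Prop :=
  ∀ (m : ℕ) (a : Fin m → ℝ), ∀ ε > (0 : ℝ), ∃ N : ℕ, ∀ j : Fin m → ℕ,
    StrictMono j → (∀ i, N ≤ j i) → |‖∑ i, a i • x (j i)‖ - ν m a| < ε

/-- The array of sequences `A` (row `A i` is the `i`-th sequence) generates the
asymptotic model whose finite-combination seminorms are given by `ν`. -/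
def GeneratesAsymptoticModel (A : ℕ → ℕ → X) (ν : ∀ l : ℕ, (Fin l → ℝ) → ℝ) : Prop :=
  ∀ (l : ℕ) (a : Fin l → ℝ), ∀ ε > (0 : ℝ), ∃ N : ℕ, ∀ j : Fin l → ℕ,
    StrictMono j → (∀ i, N ≤ j i) → |‖∑ i, a i • A i (j i)‖ - ν l a| < ε

/-- `e` is a Schauder basis of `X`. -/
def IsSchauderBasis (e : ℕ → X) : Prop :=
  ∀ x : X, ∃! a : ℕ → ℝ,
    Tendsto (fun n => ∑ i ∈ Finset.range n, a i • e i) atTop (𝓝 x)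

/-- The basis `e` is 1-unconditional. -/
def OneUnconditional (e : ℕ → X) : Prop :=
  ∀ (F : Finset ℕ) (a ε : ℕ → ℝ), (∀ i, ε i = 1 ∨ ε i = -1) →
    ‖∑ i ∈ F, (ε i * a i) • e i‖ = ‖∑ i ∈ F, a i • e i‖

/-- `x` is a block sequence with respect to the basis `e`. -/
def IsBlockSeq (e : ℕ → X) (x : ℕ → X) : Prop :=
  ∃ F : ℕ → Finset ℕ, (∀ k, (F k).Nonempty) ∧
    (∀ k l : ℕ, k < l → ∀ i ∈ F k, ∀ j ∈ F l, i < j) ∧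
    ∀ k, x k ≠ 0 ∧ x k ∈ Submodule.span ℝ (e '' ↑(F k))

/-- `z` is a finite block sequence with respect to the basis `e`. -/
def IsFinBlockSeq (e : ℕ → X) {n : ℕ} (z : Fin n → X) : Prop :=
  ∃ F : Fin n → Finset ℕ, (∀ k, (F k).Nonempty) ∧
    (∀ k l : Fin n, k < l → ∀ i ∈ F k, ∀ j ∈ F l, i < j) ∧
    ∀ k, z k ≠ 0 ∧ z k ∈ Submodule.span ℝ (e '' ↑(F k))

/-- `Y` is a block subspace of `X` (with respect to the basis `e`): the closed
linear span of an infinite normalized block sequence. -/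
def IsBlockSubspace (e : ℕ → X) (Y : Set X) : Prop :=
  ∃ y : ℕ → X, IsBlockSeq e y ∧ Normalized y ∧
    Y = closure (↑(Submodule.span ℝ (Set.range y)) : Set X)

/-- The finite sequence `z` is `C`-equivalent to a finite basic sequence whose
finite-combination norms are given by `μ`. -/
def FinSeqEquiv (C : ℝ) {n : ℕ} (μ : (Fin n → ℝ) → ℝ) (z : Fin n → X) : Prop :=
  ∃ A B : ℝ, 0 < A ∧ 0 < B ∧ A * B ≤ C ∧
    ∀ a : Fin n → ℝ, (1 / A) * μ a ≤ ‖∑ i, a i • z i‖ ∧ ‖∑ i, a i • z i‖ ≤ B * μ a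

/-- The finite basic sequence with combination norms `μ` is block representable
in `Y ⊆ X`. -/
def BlockRepresentableIn (e : ℕ → X) (Y : Set X) {n : ℕ} (μ : (Fin n → ℝ) → ℝ) : Prop :=
  ∀ ε > (0 : ℝ), ∃ z : Fin n → X, (∀ i, z i ∈ Y) ∧ IsFinBlockSeq e z ∧
    FinSeqEquiv (1 + ε) μ z

/-- `x` is a (Schauder) basic sequence. -/
def IsBasicSeq (x : ℕ → X) : Prop :=
  (∀ i, x i ≠ 0) ∧ ∃ K : ℝ, 0 < K ∧ ∀ (a : ℕ → ℝ) (m n : ℕ), m ≤ n →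
    ‖∑ i ∈ Finset.range m, a i • x i‖ ≤ K * ‖∑ i ∈ Finset.range n, a i • x i‖

end Abstract2

/-- A plegma of `k` strictly increasing `l`-tuples of naturals. -/
def IsPlegma (k l : ℕ) (s : Fin k → Fin l → ℕ) : Prop :=
  (∀ i, StrictMono (s i)) ∧
  (∀ i₁ i₂ : Fin k, ∀ j₁ j₂ : Fin l, j₁ < j₂ → s i₁ j₁ < s i₂ j₂) ∧
  (∀ i₁ i₂ : Fin k, i₁ < i₂ → ∀ j, s i₁ j ≤ s i₂ j)

/-- A strict plegma: a plegma with pairwise disjoint tuples. -/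
def IsStrictPlegma (k l : ℕ) (s : Fin k → Fin l → ℕ) : Prop :=
  IsPlegma k l s ∧ ∀ i₁ i₂ : Fin k, i₁ ≠ i₂ → ∀ j₁ j₂ : Fin l, s i₁ j₁ ≠ s i₂ j₂

section Abstract3

variable {X : Type*} [NormedAddCommGroup X] [NormedSpace ℝ X]

/-- The `l`-array `x` generates the joint spreading model with finite-combination
seminorms `ν`. -/
def GeneratesJSM (l : ℕ) (x : Fin l → ℕ → X)
    (ν : ∀ k : ℕ, (Fin l → Fin k → ℝ) → ℝ) : Prop :=
  ∀ (k : ℕ) (a : Fin l → Fin k → ℝ), ∀ ε > (0 : ℝ), ∃ N : ℕ,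
    ∀ s : Fin l → Fin k → ℕ, IsStrictPlegma l k s → (∀ i j, N ≤ s i j) →
      |‖∑ i, ∑ j, a i j • x i (s i j)‖ - ν k a| < ε

/-- `X` admits a unique joint spreading model with respect to the family of
sequences `F`. -/
def UniqueJSM (F : Set (ℕ → X)) : Prop :=
  ∃ C : ℝ, 1 ≤ C ∧ ∀ (l : ℕ) (x y : Fin l → ℕ → X),
    (∀ i, x i ∈ F) → (∀ i, y i ∈ F) →
    ∀ ν μ, GeneratesJSM l x ν → GeneratesJSM l y μ →
      ∃ A B : ℝ, 0 < A ∧ 0 < B ∧ A * B ≤ C ∧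
        ∀ (k : ℕ) (a : Fin l → Fin k → ℝ),
          (1 / A) * μ k a ≤ ν k a ∧ ν k a ≤ B * μ k a

/-- `X` admits a unique asymptotic model with respect to the family of
sequences `F`. -/
def UniqueAM (F : Set (ℕ → X)) : Prop :=
  ∀ x y : ℕ → ℕ → X, (∀ i, x i ∈ F) → (∀ i, y i ∈ F) →
    ∀ ν μ, GeneratesAsymptoticModel x ν → GeneratesAsymptoticModel y μ →
      ∃ C : ℝ, 1 ≤ C ∧ NormFamEquiv C μ ν

end Abstract3

/-- A bundled Banach-space candidate. -/
structure BanachPkg : Type 1 where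
  X : Type
  [grp : NormedAddCommGroup X]
  [mod : NormedSpace ℝ X]

attribute [instance] BanachPkg.grp BanachPkg.mod

/-! ### c₀₀ and the norming sets -/

/-- The finitely supported real sequences. -/
abbrev c00 : Type := ℕ →₀ ℝ

/-- Minimum of the support (0 for the zero vector). -/
def minSupp (x : c00) : ℕ := if h : x.support.Nonempty then x.support.min' h else 0

/-- Maximum of the support (0 for the zero vector). -/
def maxSupp (x : c00) : ℕ := if h : x.support.Nonempty then x.support.max' h else 0

/-- Minimum of a finset of naturals (0 if empty). -/
def finsetMin (F : Finset ℕ) : ℕ := if h : F.Nonempty then F.min' h else 0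

/-- `x < y` as successive (block) vectors. -/
def Blocks (x y : c00) : Prop := maxSupp x < minSupp y

/-- The Schreier families. -/
def Schreier : ℕ → Set (Finset ℕ)
  | 0 => {F | ∃ i : ℕ, F = {i}}
  | n + 1 => {F | ∃ (d : ℕ) (G : Fin d → Finset ℕ),
      (∀ k, G k ∈ Schreier n) ∧
      (∀ k l : Fin d, k < l → ∀ i ∈ G k, ∀ j ∈ G l, i < j) ∧
      (∀ i ∈ F, d ≤ i) ∧ F = Finset.univ.biUnion G}

/-- The family `A_m` of sets of cardinality at most `m`. -/
def SchreierA (m : ℕ) : Set (Finset ℕ) := {F | F.card ≤ m}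

/-- The operation `A * B` on families of finite sets. -/
def famStar (A B : Set (Finset ℕ)) : Set (Finset ℕ) :=
  {F | ∃ (d : ℕ) (G : Fin d → Finset ℕ),
      (∀ k, G k ∈ B) ∧ (∀ k, (G k).Nonempty) ∧
      (∀ k l : Fin d, k < l → ∀ i ∈ G k, ∀ j ∈ G l, i < j) ∧
      (Finset.univ.image fun k => finsetMin (G k)) ∈ A ∧ F = Finset.univ.biUnion G}

/-- A finite block sequence in `c00` is `S`-admissible. -/
def Admissible (S : Set (Finset ℕ)) {d : ℕ} (f : Fin d → c00) : Prop :=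
  (∀ q, (f q).support.Nonempty) ∧
  (∀ q r : Fin d, q < r → Blocks (f q) (f r)) ∧
  (Finset.univ.image fun q => minSupp (f q)) ∈ S

/-- The two fixed sequences `(m_j)`, `(n_j)` (indexed here starting at `0`, so that
`m 0` plays the role of `m_1` etc.) together with their growth conditions. -/
structure IWParams where
  m : ℕ → ℕ
  n : ℕ → ℕ
  m_mono : StrictMono m
  n_mono : StrictMono n
  m_first : m 0 = 2
  n_first : n 0 = 1
  growth_exp : ∀ C : ℝ, 1 < C → Tendsto (fun j => C ^ (n j) / (m j : ℝ)) atTop atTop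
  growth_ratio : Tendsto (fun j => (m j : ℝ) / (m (j + 1) : ℝ)) atTop (𝓝 0)
  growth_sum : ∀ (l : ℕ) (js : Fin l → ℕ) (j : ℕ), (∀ i, js i ≤ j) →
    (∏ i, m (js i)) < m (j + 1) ^ 2 → (∑ i, n (js i)) + 1 < n (j + 1)

/-- The action of a functional `f ∈ c00` on a vector `x ∈ c00`. -/
def evalPair (f x : c00) : ℝ := f.sum fun i a => a * x i

/-- The norming set `W_iw`, together with admissible weights: `WIW P f w` means
that `f` belongs to the norming set and `w` is a weight of (one representation of)
`f`; the unit functionals `±e_i^*` have weight `∞`. -/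
inductive WIW (P : IWParams) : c00 → ℕ∞ → Prop
  | unit (i : ℕ) (s : ℝ) (hs : s = 1 ∨ s = -1) : WIW P (Finsupp.single i s) ⊤
  | op (l : ℕ) (hl : 0 < l) (js : Fin l → ℕ) (d : ℕ) (f : Fin d → c00) (w : Fin d → ℕ∞)
      (hf : ∀ q, WIW P (f q) (w q))
      (hadm : Admissible (Schreier (∑ i, P.n (js i))) f)
      (hvfg : ∀ q r : Fin d, (q : ℕ) + 1 = (r : ℕ) → (maxSupp (f q) : ℕ∞) < w r) :
      WIW P (((∏ i, P.m (js i) : ℕ) : ℝ)⁻¹ • ∑ q, f q) ((∏ i, P.m (js i) : ℕ) : ℕ∞)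

/-- Membership in the norming set `W_iw`. -/
def memWIW (P : IWParams) (f : c00) : Prop := ∃ w, WIW P f w

/-- The norm of `X_iw`, on finitely supported vectors. -/
def iwNorm (P : IWParams) (x : c00) : ℝ :=
  sSup {r | ∃ f, memWIW P f ∧ r = evalPair f x}

/-- The dual norm of a finitely supported functional, as an element of `X_iw^*`. -/
def iwDualNorm (P : IWParams) (f : c00) : ℝ :=
  sSup {r | ∃ x : c00, iwNorm P x ≤ 1 ∧ r = evalPair f x}

/-- The auxiliary norming set `W_aux^N` together with admissible weights. -/
inductive WAux (P : IWParams) (N : ℕ) : c00 → ℕ∞ → Prop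
  | unit (i : ℕ) (s : ℝ) (hs : s = 1 ∨ s = -1) : WAux P N (Finsupp.single i s) ⊤
  | op (l : ℕ) (hl : 0 < l) (js : Fin l → ℕ) (d : ℕ) (f : Fin d → c00) (w : Fin d → ℕ∞)
      (hf : ∀ q, WAux P N (f q) (w q))
      (hadm : Admissible (famStar (Schreier (∑ i, P.n (js i))) (SchreierA 3)) f)
      (hlarge : ∀ q : Fin d, 0 < (q : ℕ) → (N : ℕ∞) < w q) :
      WAux P N (((∏ i, P.m (js i) : ℕ) : ℝ)⁻¹ • ∑ q, f q) ((∏ i, P.m (js i) : ℕ) : ℕ∞)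

/-- An `(n, ε)` basic special convex combination. -/
def IsBasicSCC (n : ℕ) (ε : ℝ) (x : c00) : Prop :=
  ∃ F : Finset ℕ, x.support ⊆ F ∧ F ∈ Schreier n ∧ (∀ i, 0 ≤ x i) ∧
    (∑ i ∈ F, x i) = 1 ∧ ∀ G ⊆ F, G ∈ Schreier (n - 1) → (∑ i ∈ G, x i) < ε

/-- An `(n, ε)` special convex combination `∑ c i • x i`. -/
def IsSCC (n : ℕ) (ε : ℝ) {m : ℕ} (c : Fin m → ℝ) (x : Fin m → c00) : Prop :=
  (∀ i, (x i).support.Nonempty) ∧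
  (∀ i j : Fin m, i < j → Blocks (x i) (x j)) ∧
  IsBasicSCC n ε (∑ i, c i • Finsupp.single (minSupp (x i)) (1 : ℝ))

/-- `x` generates, with respect to the norm function `Nrm` on `c00`, the spreading
model whose finite-combination seminorms are `ν`. -/
def GeneratesSMwith (Nrm : c00 → ℝ) (x : ℕ → c00) (ν : ∀ m : ℕ, (Fin m → ℝ) → ℝ) : Prop :=
  ∀ (m : ℕ) (a : Fin m → ℝ), ∀ ε > (0 : ℝ), ∃ N : ℕ, ∀ j : Fin m → ℕ,
    StrictMono j → (∀ i, N ≤ j i) → |Nrm (∑ i, a i • x (j i)) - ν m a| < ε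

/-- The array `A` generates, with respect to the norm function `Nrm` on `c00`, the
asymptotic model whose finite-combination seminorms are `ν`. -/
def GeneratesAMwith (Nrm : c00 → ℝ) (A : ℕ → ℕ → c00) (ν : ∀ l : ℕ, (Fin l → ℝ) → ℝ) : Prop :=
  ∀ (l : ℕ) (a : Fin l → ℝ), ∀ ε > (0 : ℝ), ∃ N : ℕ, ∀ j : Fin l → ℕ,
    StrictMono j → (∀ i, N ≤ j i) → |Nrm (∑ i, a i • A i (j i)) - ν l a| < ε

/-- A normalized block sequence in `c00` with respect to a norm function. -/
def IsNormBlockSeq (Nrm : c00 → ℝ) (y : ℕ → c00) : Prop :=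
  (∀ k, (y k).support.Nonempty) ∧ (∀ k, Blocks (y k) (y (k + 1))) ∧ ∀ k, Nrm (y k) = 1

/-- A `(C, (j_i)_{i ∈ I})` rapidly increasing sequence, `I` a (finite) interval. -/
def IsRIS (P : IWParams) (C : ℝ) (I : Finset ℕ) (j : ℕ → ℕ) (x : ℕ → c00) : Prop :=
  (∀ a ∈ I, ∀ b ∈ I, ∀ c : ℕ, a ≤ c → c ≤ b → c ∈ I) ∧
  (∀ a ∈ I, ∀ b ∈ I, a < b → j a < j b) ∧
  (∀ i ∈ I, (x i).support.Nonempty) ∧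
  (∀ a ∈ I, ∀ b ∈ I, a < b → Blocks (x a) (x b)) ∧
  (∀ i ∈ I, iwNorm P (x i) ≤ C) ∧
  (∀ i ∈ I, ∀ i' ∈ I, i' + 1 = i → (maxSupp (x i') : ℝ) < Real.sqrt (P.m (j i))) ∧
  (∀ i ∈ I, ∀ f w, WIW P f w → w < ((P.m (j i) : ℕ) : ℕ∞) →
    |evalPair f (x i)| ≤ C / (w.toNat : ℝ))

/-- An infinite `(C, (j_i)_i)` rapidly increasing sequence. -/
def IsRISNat (P : IWParams) (C : ℝ) (j : ℕ → ℕ) (x : ℕ → c00) : Prop :=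
  StrictMono j ∧ (∀ i, (x i).support.Nonempty) ∧ (∀ i, Blocks (x i) (x (i + 1))) ∧
  (∀ i, iwNorm P (x i) ≤ C) ∧
  (∀ i, (maxSupp (x i) : ℝ) < Real.sqrt (P.m (j (i + 1)))) ∧
  (∀ i, ∀ f w, WIW P f w → w < ((P.m (j i) : ℕ) : ℕ∞) →
    |evalPair f (x i)| ≤ C / (w.toNat : ℝ))

/-- `X` together with the basis `e` is a realization of the space `X_iw`: a Banach
space in which `c00` sits isometrically (w.r.t. `iwNorm`) and densely. -/
structure IsIWRealization (P : IWParams) (X : Type*) [NormedAddCommGroup X]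
    [NormedSpace ℝ X] (e : ℕ → X) : Prop where
  complete : CompleteSpace X
  dense : DenseRange fun a : c00 => ∑ i ∈ a.support, a i • e i
  norm_eq : ∀ a : c00, ‖∑ i ∈ a.support, a i • e i‖ = iwNorm P a

/-- The conjugate exponent of `p`. -/
def conjExp (p : ℝ) : ℝ := p / (p - 1)

/-- The norming set `W_iw^p` together with admissible weights. -/
inductive WIWp (P : IWParams) (p : ℝ) : c00 → ℕ∞ → Prop
  | unit (i : ℕ) (s : ℝ) (hs : s = 1 ∨ s = -1) : WIWp P p (Finsupp.single i s) ⊤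
  | op (l : ℕ) (hl : 0 < l) (js : Fin l → ℕ) (d : ℕ) (f : Fin d → c00) (w : Fin d → ℕ∞)
      (lam : Fin d → ℝ) (hlam : (∑ q, |lam q| ^ conjExp p) ≤ 1)
      (hf : ∀ q, WIWp P p (f q) (w q))
      (hadm : Admissible (Schreier (∑ i, P.n (js i))) f)
      (hvfg : ∀ q r : Fin d, (q : ℕ) + 1 = (r : ℕ) → (maxSupp (f q) : ℕ∞) < w r) :
      WIWp P p (((∏ i, P.m (js i) : ℕ) : ℝ)⁻¹ • ∑ q, lam q • f q)
        ((∏ i, P.m (js i) : ℕ) : ℕ∞)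

/-- The norm of `X_iw^p` on finitely supported vectors. -/
def iwpNorm (P : IWParams) (p : ℝ) (x : c00) : ℝ :=
  sSup {r | ∃ f, (∃ w, WIWp P p f w) ∧ r = evalPair f x}

/-- The norming set of the space `X̃_iw`, together with admissible weights. -/
inductive WT (P : IWParams) : c00 → ℕ∞ → Prop
  | unit (i : ℕ) (s : ℝ) (hs : s = 1 ∨ s = -1) : WT P (Finsupp.single i s) ⊤
  | op (j : ℕ) (d : ℕ) (f : Fin d → c00) (w : Fin d → ℕ∞)
      (hf : ∀ q, WT P (f q) (w q))
      (hadm : Admissible (Schreier (P.n j)) f)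
      (hvfg : ∀ q r : Fin d, (q : ℕ) + 1 = (r : ℕ) → (maxSupp (f q) : ℕ∞) < w r) :
      WT P ((P.m j : ℝ)⁻¹ • ∑ q, f q) ((P.m j : ℕ) : ℕ∞)

/-- The norm of `X̃_iw` on finitely supported vectors. -/
def tNorm (P : IWParams) (x : c00) : ℝ :=
  sSup {r | ∃ f, (∃ w, WT P f w) ∧ r = evalPair f x}

end

namespace IWArray

/-! ### The pairing and supports -/

lemma evalPair_eq_sum (f x : c00) {s : Finset ℕ} (hs : f.support ⊆ s) :
    evalPair f x = ∑ i ∈ s, f i * x i := by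
  unfold evalPair
  exact Finsupp.sum_of_support_subset f hs _ (by simp)

/-- The pairing `evalPair` as a bilinear map. -/
noncomputable def ev : c00 →ₗ[ℝ] c00 →ₗ[ℝ] ℝ :=
  LinearMap.mk₂ ℝ evalPair
    (by
      intro f g x
      unfold evalPair
      rw [Finsupp.sum_add_index'] <;> simp [add_mul])
    (by
      intro c f x
      unfold evalPair
      rw [Finsupp.sum_smul_index'] <;> simp [Finsupp.mul_sum, mul_assoc])
    (by
      intro f x y
      simp [evalPair, mul_add, Finsupp.sum_add])
    (by
      intro c f x
      simp [evalPair, Finsupp.mul_sum, mul_left_comm])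

lemma ev_apply (f x : c00) : ev f x = evalPair f x := rfl

lemma ev_eq_sum_right (f x : c00) : ev f x = ∑ i ∈ x.support, f i * x i := by
  rw [ev_apply, evalPair_eq_sum f x (Finset.subset_union_left (s₂ := x.support))]
  symm
  apply Finset.sum_subset Finset.subset_union_right
  intro i _ hi
  simp [Finsupp.notMem_support_iff.mp hi]

lemma ev_single (i : ℕ) (s : ℝ) (x : c00) : ev (Finsupp.single i s) x = s * x i := by
  simp [ev_apply, evalPair]

lemma ev_eq_zero {f x : c00} (h : ∀ i ∈ f.support, i ∉ x.support) : ev f x = 0 := by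
  rw [ev_apply, evalPair_eq_sum f x subset_rfl]
  refine Finset.sum_eq_zero fun i hi => ?_
  simp [Finsupp.notMem_support_iff.mp (h i hi)]

lemma ev_ne_zero {f x : c00} (h : ev f x ≠ 0) : ∃ i ∈ f.support, i ∈ x.support := by
  by_contra hc
  push Not at hc
  exact h (ev_eq_zero hc)

lemma minSupp_le {x : c00} {i : ℕ} (hi : i ∈ x.support) : minSupp x ≤ i := by
  unfold minSupp
  rw [dif_pos ⟨i, hi⟩]
  exact Finset.min'_le _ _ hi

lemma le_maxSupp {x : c00} {i : ℕ} (hi : i ∈ x.support) : i ≤ maxSupp x := by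
  unfold maxSupp
  rw [dif_pos ⟨i, hi⟩]
  exact Finset.le_max' _ _ hi

lemma minSupp_mem {x : c00} (h : x.support.Nonempty) : minSupp x ∈ x.support := by
  unfold minSupp
  rw [dif_pos h]
  exact Finset.min'_mem _ _

lemma maxSupp_mem {x : c00} (h : x.support.Nonempty) : maxSupp x ∈ x.support := by
  unfold maxSupp
  rw [dif_pos h]
  exact Finset.max'_mem _ _

lemma minSupp_le_maxSupp (x : c00) : minSupp x ≤ maxSupp x := by
  by_cases h : x.support.Nonempty
  · exact le_maxSupp (minSupp_mem h)
  · simp [minSupp, maxSupp, h]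

lemma maxSupp_le {x : c00} {n : ℕ} (h : ∀ i ∈ x.support, i ≤ n) : maxSupp x ≤ n := by
  by_cases hx : x.support.Nonempty
  · exact h _ (maxSupp_mem hx)
  · simp [maxSupp, hx]

lemma maxSupp_mono {x y : c00} (h : x.support ⊆ y.support) : maxSupp x ≤ maxSupp y :=
  maxSupp_le fun _ hi => le_maxSupp (h hi)

lemma blocks_lt {x y : c00} (h : Blocks x y) {i j : ℕ} (hi : i ∈ x.support)
    (hj : j ∈ y.support) : i < j :=
  (le_maxSupp hi).trans_lt (h.trans_le (minSupp_le hj))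

lemma blocks_trans {x y z : c00} (h : Blocks x y) (h' : Blocks y z) : Blocks x z :=
  lt_trans h ((minSupp_le_maxSupp y).trans_lt h')

lemma blocks_of_lt {y : ℕ → c00} (h : ∀ k, Blocks (y k) (y (k + 1))) {a b : ℕ} (hab : a < b) :
    Blocks (y a) (y b) := by
  induction b, hab using Nat.le_induction with
  | base => exact h a
  | succ b _ ih => exact blocks_trans ih (h b)

/-! ### Basic facts on the norming set -/

variable {P : IWParams}

lemma two_le_m (P : IWParams) (j : ℕ) : 2 ≤ P.m j := by
  rw [← P.m_first]; exact P.m_mono.monotone (Nat.zero_le j)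

lemma one_le_n (P : IWParams) (j : ℕ) : 1 ≤ P.n j := by
  rw [← P.n_first]; exact P.n_mono.monotone (Nat.zero_le j)

lemma two_pow_le_prod (P : IWParams) {l : ℕ} (js : Fin l → ℕ) : 2 ^ l ≤ ∏ i, P.m (js i) := by
  simpa using Finset.pow_card_le_prod Finset.univ (fun i => P.m (js i)) 2
    (fun i _ => two_le_m P (js i))

lemma two_le_prod (P : IWParams) {l : ℕ} (hl : 0 < l) (js : Fin l → ℕ) :
    2 ≤ ∏ i, P.m (js i) :=
  (Nat.le_self_pow hl.ne' 2).trans (two_pow_le_prod P js)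

lemma m_le_prod (P : IWParams) {l : ℕ} (js : Fin l → ℕ) (i : Fin l) :
    P.m (js i) ≤ ∏ i, P.m (js i) :=
  Finset.single_le_prod' (f := fun i => P.m (js i))
    (fun i _ => (one_le_two.trans (two_le_m P (js i)))) (Finset.mem_univ i)

/-- In a very fast growing block sequence each weight exceeds the supports of all the
preceding functionals. -/
lemma vfg_all {d : ℕ} {f : Fin d → c00} {w : Fin d → ℕ∞}
    (hb : ∀ q r : Fin d, q < r → Blocks (f q) (f r))
    (hv : ∀ q r : Fin d, (q : ℕ) + 1 = (r : ℕ) → (maxSupp (f q) : ℕ∞) < w r)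
    {q r : Fin d} (hqr : q < r) : (maxSupp (f q) : ℕ∞) < w r := by
  have hr : 0 < (r : ℕ) := lt_of_le_of_lt (Nat.zero_le _) hqr
  let r' : Fin d := ⟨r - 1, by omega⟩
  have h1 : (maxSupp (f r') : ℕ∞) < w r := hv r' r (by simp [r']; omega)
  refine lt_of_le_of_lt ?_ h1
  rcases eq_or_lt_of_le (show q ≤ r' by simp [Fin.le_def, r']; omega) with h | h
  · rw [h]
  · exact_mod_cast (le_of_lt (hb _ _ h)).trans (minSupp_le_maxSupp _)

/-- The constructor `WIW.op` with the family indexed by a finite subset of a linear order. -/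
lemma op_finset {ι : Type*} [LinearOrder ι] (I : Finset ι) {l : ℕ} (hl : 0 < l)
    (js : Fin l → ℕ) (f : ι → c00) (w : ι → ℕ∞)
    (hf : ∀ q ∈ I, WIW P (f q) (w q)) (hne : ∀ q ∈ I, (f q).support.Nonempty)
    (hb : ∀ q ∈ I, ∀ r ∈ I, q < r → Blocks (f q) (f r))
    (hv : ∀ q ∈ I, ∀ r ∈ I, q < r → (maxSupp (f q) : ℕ∞) < w r)
    (hS : I.image (fun q => minSupp (f q)) ∈ Schreier (∑ i, P.n (js i))) :
    WIW P (((∏ i, P.m (js i) : ℕ) : ℝ)⁻¹ • ∑ q ∈ I, f q) ((∏ i, P.m (js i) : ℕ) : ℕ∞) := by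
  let g := I.orderEmbOfFin rfl
  have hg : ∀ q, g q ∈ I := fun q => Finset.orderEmbOfFin_mem I rfl q
  have himg : Finset.univ.image g = I := Finset.image_orderEmbOfFin_univ I rfl
  have hsum : ∑ q ∈ I, f q = ∑ q, f (g q) := by
    conv_lhs => rw [← himg]
    rw [Finset.sum_image (fun a _ b _ h => g.injective h)]
  rw [hsum]
  refine WIW.op l hl js I.card (fun q => f (g q)) (fun q => w (g q)) (fun q => hf _ (hg q))
    ⟨fun q => hne _ (hg q), fun q r hqr => hb _ (hg q) _ (hg r) (g.strictMono hqr), ?_⟩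
    (fun q r hqr => hv _ (hg q) _ (hg r) (g.strictMono (Fin.lt_def.mpr (by omega))))
  convert hS using 1
  conv_rhs => rw [← himg]
  rw [Finset.image_image]
  rfl

/-- At most one member of a block sequence is nonzero at a given coordinate. -/
lemma blocks_apply {d : ℕ} {f : Fin d → c00} (hb : ∀ q r : Fin d, q < r → Blocks (f q) (f r))
    {q r : Fin d} {i : ℕ} (hq : i ∈ (f q).support) (hr : i ∈ (f r).support) : q = r := by
  rcases lt_trichotomy q r with h | h | h
  · exact absurd (blocks_lt (hb _ _ h) hq hr) (lt_irrefl _)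
  · exact h
  · exact absurd (blocks_lt (hb _ _ h) hr hq) (lt_irrefl _)

lemma abs_sum_le_of_unique {ι : Type*} [Fintype ι] {t : ι → ℝ} {B : ℝ} (hB : 0 ≤ B)
    (h : ∀ q, |t q| ≤ B) (hu : ∀ q r, t q ≠ 0 → t r ≠ 0 → q = r) : |∑ q, t q| ≤ B := by
  by_cases hz : ∃ q, t q ≠ 0
  · obtain ⟨q, hq⟩ := hz
    rw [Finset.sum_eq_single q (fun r _ hr => by
      by_contra hc; exact hr (hu r q hc hq)) (by simp)]
    exact h q
  · push Not at hz
    simpa [hz] using hB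

lemma abs_sum_blocks_apply_le {d : ℕ} {f : Fin d → c00}
    (hb : ∀ q r : Fin d, q < r → Blocks (f q) (f r)) (h1 : ∀ q i, |f q i| ≤ 1) (i : ℕ) :
    |(∑ q, f q) i| ≤ 1 := by
  rw [Finsupp.finsetSum_apply]
  exact abs_sum_le_of_unique zero_le_one (fun q => h1 q i) fun q r hq hr =>
    blocks_apply hb (Finsupp.mem_support_iff.mpr hq) (Finsupp.mem_support_iff.mpr hr)

lemma abs_apply_le_one {f : c00} {w : ℕ∞} (h : WIW P f w) (i : ℕ) : |f i| ≤ 1 := by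
  induction h generalizing i with
  | unit k s hs =>
    by_cases hik : k = i
    · subst hik; rcases hs with h | h <;> simp [h]
    · simp [hik]
  | op l hl js d f w hf hadm hvfg ih =>
    have h1 := abs_sum_blocks_apply_le hadm.2.1 ih i
    rw [Finsupp.smul_apply, smul_eq_mul, abs_mul]
    have h2 : |((∏ i, P.m (js i) : ℕ) : ℝ)⁻¹| ≤ 1 := by
      rw [abs_of_nonneg (by positivity)]
      exact inv_le_one_of_one_le₀ (by exact_mod_cast one_le_two.trans (two_le_prod P hl js))
    calc _ ≤ 1 * 1 := mul_le_mul h2 h1 (abs_nonneg _) zero_le_one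
      _ = 1 := one_mul 1

/-- The `ℓ₁` norm on `c00`. -/
noncomputable def l1 (x : c00) : ℝ := ∑ i ∈ x.support, |x i|

lemma l1_nonneg (x : c00) : 0 ≤ l1 x := Finset.sum_nonneg fun _ _ => abs_nonneg _

lemma abs_ev_le_l1_of {f : c00} (hf : ∀ i, |f i| ≤ 1) (x : c00) : |ev f x| ≤ l1 x := by
  rw [ev_eq_sum_right]
  refine (Finset.abs_sum_le_sum_abs _ _).trans (Finset.sum_le_sum fun i _ => ?_)
  rw [abs_mul]
  exact mul_le_of_le_one_left (abs_nonneg _) (hf i)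

lemma abs_ev_le_l1 {f : c00} {w : ℕ∞} (h : WIW P f w) (x : c00) : |ev f x| ≤ l1 x :=
  abs_ev_le_l1_of (abs_apply_le_one h) x

/-- A functional of finite weight `w` acts on `x` with size at most `‖x‖₁ / w`. -/
lemma abs_ev_le_l1_div {f : c00} {w : ℕ} (h : WIW P f w) (x : c00) : |ev f x| ≤ l1 x / w := by
  generalize hw' : (w : ℕ∞) = w' at h
  cases h with
  | unit i s hs => exact absurd hw' (by simp)
  | op l hl js d f w'' hf hadm hvfg =>
    have hw2 : w = ∏ i, P.m (js i) := by exact_mod_cast hw'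
    rw [hw2, map_smul, LinearMap.smul_apply, smul_eq_mul, abs_mul,
      abs_of_nonneg (by positivity : (0:ℝ) ≤ ((∏ i, P.m (js i) : ℕ) : ℝ)⁻¹), div_eq_inv_mul]
    exact mul_le_mul_of_nonneg_left
      (abs_ev_le_l1_of (abs_sum_blocks_apply_le hadm.2.1 fun q i => abs_apply_le_one (hf q) i) x)
      (by positivity)

lemma memWIW_zero : memWIW P 0 := by
  refine ⟨(∏ i : Fin 1, P.m 0 : ℕ), ?_⟩
  have := WIW.op (P := P) 1 one_pos (fun _ => 0) 0 (fun q => 0) (fun q => ⊤)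
    (fun q => q.elim0) ⟨fun q => q.elim0, fun q => q.elim0, ?_⟩ (fun q => q.elim0)
  · simpa using this
  · simp only [Finset.univ_eq_empty, Finset.image_empty, Finset.univ_unique,
      Finset.sum_const, Finset.card_singleton, one_smul, P.n_first]
    exact ⟨0, fun k => k.elim0, fun k => k.elim0, fun k => k.elim0, by simp, by simp⟩

lemma bddAbove_norm (x : c00) : BddAbove {r | ∃ f, memWIW P f ∧ r = evalPair f x} := by
  refine ⟨l1 x, ?_⟩
  rintro r ⟨f, ⟨w, hf⟩, rfl⟩
  exact (le_abs_self _).trans (abs_ev_le_l1 hf x)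

lemma ev_le_iwNorm {f : c00} {w : ℕ∞} (h : WIW P f w) (x : c00) : ev f x ≤ iwNorm P x :=
  le_csSup (bddAbove_norm x) ⟨f, ⟨w, h⟩, rfl⟩

lemma iwNorm_le {x : c00} {B : ℝ} (h : ∀ f w, WIW P f w → ev f x ≤ B) : iwNorm P x ≤ B := by
  refine csSup_le ⟨_, 0, memWIW_zero, rfl⟩ ?_
  rintro r ⟨f, ⟨w, hf⟩, rfl⟩
  exact h f w hf

lemma exists_lt_ev {x : c00} {B : ℝ} (h : B < iwNorm P x) : ∃ f w, WIW P f w ∧ B < ev f x := by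
  obtain ⟨r, ⟨f, ⟨w, hf⟩, rfl⟩, hr⟩ := exists_lt_of_lt_csSup
    (s := {r | ∃ f, memWIW P f ∧ r = evalPair f x}) ⟨_, 0, memWIW_zero, rfl⟩ h
  exact ⟨f, w, hf, hr⟩

lemma minSupp_neg (f : c00) : minSupp (-f) = minSupp f := by simp [minSupp]
lemma maxSupp_neg (f : c00) : maxSupp (-f) = maxSupp f := by simp [maxSupp]

lemma WIW_neg {f : c00} {w : ℕ∞} (h : WIW P f w) : WIW P (-f) w := by
  induction h with
  | unit i s hs =>
    rw [← Finsupp.single_neg]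
    exact WIW.unit i (-s) (by rcases hs with h | h <;> simp [h])
  | op l hl js d f w hf hadm hvfg ih =>
    rw [← smul_neg, ← Finset.sum_neg_distrib]
    refine WIW.op l hl js d (fun q => -f q) w ih ⟨?_, ?_, ?_⟩ ?_
    · simpa using hadm.1
    · simpa [Blocks, minSupp_neg, maxSupp_neg] using hadm.2.1
    · simpa [minSupp_neg] using hadm.2.2
    · simpa [maxSupp_neg] using hvfg

lemma abs_ev_le_iwNorm {f : c00} {w : ℕ∞} (h : WIW P f w) (x : c00) :
    |ev f x| ≤ iwNorm P x := by
  rw [abs_le]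
  refine ⟨?_, ev_le_iwNorm h x⟩
  have := ev_le_iwNorm (WIW_neg h) x
  simp at this
  linarith

/-! ### Schreier families -/

lemma schreier_one_iff {F : Finset ℕ} : F ∈ Schreier 1 ↔ ∀ i ∈ F, F.card ≤ i := by
  constructor
  · rintro ⟨d, G, hG, -, hd, rfl⟩ i hi
    refine le_trans ?_ (hd i hi)
    refine Finset.card_biUnion_le.trans ?_
    have : ∀ k, (G k).card ≤ 1 := by
      intro k
      obtain ⟨i, hi⟩ := hG k
      simp [hi]
    simpa using Finset.sum_le_sum fun k (_ : k ∈ Finset.univ) => this k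
  · intro h
    let g := F.orderEmbOfFin rfl
    refine ⟨F.card, fun k => {g k}, fun k => ⟨g k, rfl⟩, ?_, h, ?_⟩
    · intro k l hkl i hi j hj
      simp only [Finset.mem_singleton] at hi hj
      subst hi hj
      exact g.strictMono hkl
    · have := Finset.image_orderEmbOfFin_univ F rfl
      ext i
      have h2 : i ∈ F ↔ ∃ a, g a = i := by
        conv_lhs => rw [← this]
        rw [Finset.mem_image]
        simp only [Finset.mem_univ, true_and, g]
      rw [h2]
      simp only [Finset.mem_biUnion, Finset.mem_singleton, Finset.mem_univ, true_and, eq_comm]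

/-- Schreier families of order at least one are hereditary and spreading. -/
lemma schreier_spread {n : ℕ} (hn : 1 ≤ n) {F G : Finset ℕ} (hF : F ∈ Schreier n) (φ : ℕ → ℕ)
    (hφ : StrictMonoOn φ G) (hm : ∀ g ∈ G, φ g ∈ F) (hle : ∀ g ∈ G, φ g ≤ g) :
    G ∈ Schreier n := by
  induction n, hn using Nat.le_induction generalizing F G with
  | base =>
    rw [schreier_one_iff] at hF ⊢
    intro i hi
    exact (Finset.card_le_card_of_injOn φ hm hφ.injOn).trans ((hF _ (hm i hi)).trans (hle i hi))
  | succ n hn ih =>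
    obtain ⟨d, H, hH, hord, hd, rfl⟩ := hF
    refine ⟨d, fun r => G.filter (fun g => φ g ∈ H r), fun r => ?_, ?_, ?_, ?_⟩
    · exact ih (hH r) (hφ.mono (fun x hx => (Finset.mem_filter.mp hx).1))
        (fun g hg => (Finset.mem_filter.mp hg).2)
        (fun g hg => hle g (Finset.mem_filter.mp hg).1)
    · intro k l hkl i hi j hj
      rw [Finset.mem_filter] at hi hj
      exact (hφ.lt_iff_lt hi.1 hj.1).mp (hord k l hkl _ hi.2 _ hj.2)
    · exact fun i hi => (hd _ (hm i hi)).trans (hle i hi)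
    · ext g
      simp only [Finset.mem_biUnion, Finset.mem_univ, true_and, Finset.mem_filter]
      constructor
      · intro hg
        obtain ⟨r, -, hr⟩ := Finset.mem_biUnion.mp (hm g hg)
        exact ⟨r, hg, hr⟩
      · rintro ⟨r, hg, -⟩
        exact hg

lemma schreier_mono {n n' : ℕ} (h : n ≤ n') {F : Finset ℕ} (hF : F ∈ Schreier n)
    (h1 : ∀ i ∈ F, 1 ≤ i) : F ∈ Schreier n' := by
  induction n', h using Nat.le_induction with
  | base => exact hF
  | succ n' _ ih =>
    refine ⟨1, fun _ => F, fun _ => ih, ?_, h1, by simp⟩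
    intro k l hkl
    exact absurd hkl (by simp [Subsingleton.elim k l])

/-- A union of successive members of `S_b` whose left ends form a member of `S_a` belongs to
`S_{a+b}`. -/
lemma schreier_comp {ι : Type*} [LinearOrder ι] {a b : ℕ} {I : Finset ι} {u : ι → ℕ}
    (hu : StrictMonoOn u I) (hI : I.image u ∈ Schreier a) {G : ι → Finset ℕ}
    (hG : ∀ k ∈ I, G k ∈ Schreier b) (hle : ∀ k ∈ I, ∀ i ∈ G k, u k ≤ i)
    (hord : ∀ k ∈ I, ∀ l ∈ I, k < l → ∀ i ∈ G k, ∀ j ∈ G l, i < j) :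
    I.biUnion G ∈ Schreier (a + b) := by
  induction a generalizing I with
  | zero =>
    obtain ⟨i, hi⟩ := hI
    have hc : I.card = 1 := by
      rw [← Finset.card_image_of_injOn hu.injOn, hi, Finset.card_singleton]
    obtain ⟨k, rfl⟩ := Finset.card_eq_one.mp hc
    simpa using hG k (by simp)
  | succ a ih =>
    obtain ⟨d, H, hH, hHord, hd, hHu⟩ := hI
    rw [Nat.succ_add]
    have hsub : ∀ r, I.filter (fun k => u k ∈ H r) ⊆ I := fun r => Finset.filter_subset _ _
    refine ⟨d, fun r => (I.filter (fun k => u k ∈ H r)).biUnion G, fun r => ?_, ?_, ?_, ?_⟩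
    · refine ih (hu.mono (by exact_mod_cast hsub r)) ?_ (fun k hk => hG k (hsub r hk))
        (fun k hk => hle k (hsub r hk)) (fun k hk l hl => hord k (hsub r hk) l (hsub r hl))
      convert hH r using 1
      ext i
      simp only [Finset.mem_image, Finset.mem_filter]
      constructor
      · rintro ⟨k, ⟨_, hk⟩, rfl⟩
        exact hk
      · intro hi
        have : i ∈ I.image u := by
          rw [hHu]; exact Finset.mem_biUnion.mpr ⟨r, Finset.mem_univ _, hi⟩
        obtain ⟨k, hk, rfl⟩ := Finset.mem_image.mp this
        exact ⟨k, ⟨hk, hi⟩, rfl⟩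
    · intro r r' hrr i hi j hj
      simp only [Finset.mem_biUnion, Finset.mem_filter] at hi hj
      obtain ⟨k, ⟨hkI, hk⟩, hik⟩ := hi
      obtain ⟨l, ⟨hlI, hl⟩, hjl⟩ := hj
      exact hord k hkI l hlI ((hu.lt_iff_lt hkI hlI).mp (hHord r r' hrr _ hk _ hl)) i hik j hjl
    · intro i hi
      obtain ⟨k, hk, hik⟩ := Finset.mem_biUnion.mp hi
      exact (hd _ (Finset.mem_image_of_mem u hk)).trans (hle k hk i hik)
    · ext i
      simp only [Finset.mem_biUnion, Finset.mem_univ, true_and, Finset.mem_filter]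
      constructor
      · rintro ⟨k, hk, hik⟩
        have : u k ∈ I.image u := Finset.mem_image_of_mem u hk
        rw [hHu] at this
        obtain ⟨r, -, hr⟩ := Finset.mem_biUnion.mp this
        exact ⟨r, k, ⟨hk, hr⟩, hik⟩
      · rintro ⟨r, k, ⟨hk, -⟩, hik⟩
        exact ⟨k, hk, hik⟩

/-- A hereditary enlargement of the Schreier family `S_n`, transported to a set of indices along
`v`: the pieces need not be successive and empty pieces are allowed.  Only smallness of measures
on such sets is used, so the enlargement is harmless. -/
def TT {ι : Type*} (v : ι → ℕ) : ℕ → Finset ι → Prop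
  | 0, A => A.card ≤ 1
  | n + 1, A => ∃ (d : ℕ) (G : Fin d → Finset ι),
      (∀ r, TT v n (G r)) ∧ (∀ k ∈ A, d ≤ v k) ∧ ∀ k ∈ A, ∃ r, k ∈ G r

/-- The families `TT` are stable under spreading and injective reindexing. -/
lemma TT_spread {ι κ : Type*} [DecidableEq κ] {v : ι → ℕ} {v' : κ → ℕ} {n : ℕ} {A : Finset ι}
    {H : Finset κ} (hH : TT v' n H) (φ : ι → κ) (hm : ∀ k ∈ A, φ k ∈ H)
    (hinj : Set.InjOn φ A) (hle : ∀ k ∈ A, v' (φ k) ≤ v k) : TT v n A := by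
  induction n generalizing A H with
  | zero => exact (Finset.card_le_card_of_injOn φ hm hinj).trans hH
  | succ n ih =>
    obtain ⟨d, G, hG, hd, hc⟩ := hH
    refine ⟨d, fun r => A.filter (fun k => φ k ∈ G r), fun r => ?_, ?_, ?_⟩
    · exact ih (hG r) (fun k hk => (Finset.mem_filter.mp hk).2)
        (hinj.mono (fun x hx => (Finset.mem_filter.mp hx).1))
        (fun k hk => hle k (Finset.mem_filter.mp hk).1)
    · exact fun k hk => (hd _ (hm k hk)).trans (hle k hk)
    · intro k hk
      obtain ⟨r, hr⟩ := hc _ (hm k hk)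
      exact ⟨r, Finset.mem_filter.mpr ⟨hk, hr⟩⟩

lemma TT_subset {ι : Type*} [DecidableEq ι] {v : ι → ℕ} {n : ℕ} {A B : Finset ι}
    (hB : TT v n B) (h : A ⊆ B) : TT v n A :=
  TT_spread hB id (fun _ hk => h hk) (Set.injOn_id _) (fun _ _ => le_rfl)

lemma TT_of_schreier {n : ℕ} {F : Finset ℕ} (hF : F ∈ Schreier n) : TT id n F := by
  induction n generalizing F with
  | zero =>
    obtain ⟨i, rfl⟩ := hF
    simp [TT]
  | succ n ih =>
    obtain ⟨d, G, hG, -, hd, rfl⟩ := hF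
    exact ⟨d, G, fun r => ih (hG r), hd, fun k hk => by simpa using hk⟩

/-- Indices that can be assigned injectively to members of an admissible block sequence starting
to the left of `v k` form a small set. -/
lemma TT_of_admissible {n d : ℕ} {f : Fin d → c00} (hf : Admissible (Schreier n) f) {ι : Type*}
    {v : ι → ℕ} {A : Finset ι} (φ : ι → Fin d) (hinj : Set.InjOn φ A)
    (hle : ∀ k ∈ A, minSupp (f (φ k)) ≤ v k) : TT v n A := by
  refine TT_spread (TT_of_schreier hf.2.2) (fun k => minSupp (f (φ k))) (by simp) ?_ hle
  intro k hk l hl hkl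
  refine hinj hk hl (blocks_apply hf.2.1 (minSupp_mem (hf.1 _)) ?_)
  simp only at hkl
  rw [hkl]
  exact minSupp_mem (hf.1 _)

lemma sum_biUnion_le {ι κ : Type*} [DecidableEq ι] [DecidableEq κ] (s : Finset κ)
    (G : κ → Finset ι) {c : ι → ℝ} (hc : ∀ k, 0 ≤ c k) :
    ∑ k ∈ s.biUnion G, c k ≤ ∑ r ∈ s, ∑ k ∈ G r, c k := by
  induction s using Finset.induction_on with
  | empty => simp
  | insert a s ha ih =>
    rw [Finset.biUnion_insert, Finset.sum_insert ha]
    have h := Finset.sum_union_inter (s₁ := G a) (s₂ := s.biUnion G) (f := c)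
    have h0 : 0 ≤ ∑ k ∈ G a ∩ s.biUnion G, c k := Finset.sum_nonneg fun k _ => hc k
    linarith

/-! ### Special convex combinations -/

/-- Existence of special convex combinations.  Given successive intervals `[u k, v k]`, there is a
convex combination supported on indices whose left ends form an `S_n` set, while index sets
whose right ends are of complexity `p < n` have measure at most `ε`. -/
lemma exists_scc {u v : ℕ → ℕ} (huv : ∀ k, u k ≤ v k) (hvu : ∀ k, v k < u (k + 1)) (n : ℕ) :
    ∀ ε > (0 : ℝ), ∀ K : ℕ, ∃ (F : Finset ℕ) (c : ℕ → ℝ), (∀ k ∈ F, K ≤ k) ∧ (∀ k, 0 ≤ c k) ∧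
      ∑ k ∈ F, c k = 1 ∧ F.image u ∈ Schreier n ∧
      ∀ p < n, ∀ A ⊆ F, TT v p A → ∑ k ∈ A, c k ≤ ε := by
  have hu : StrictMono u := strictMono_nat_of_lt_succ fun k => (huv k).trans_lt (hvu k)
  induction n with
  | zero =>
    intro ε hε K
    exact ⟨{K}, fun _ => 1, by simp, fun _ => zero_le_one, by simp, ⟨u K, by simp⟩, by simp⟩
  | succ n ih =>
    intro ε hε K
    obtain ⟨M, hM⟩ := exists_nat_gt (2 / ε)
    set K' := max K (M + 1) with hK'
    set N := u K' with hN
    have hNK : M + 1 ≤ N := (le_max_right _ _).trans (hu.le_apply)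
    have hN0 : (0 : ℝ) < N := by exact_mod_cast (Nat.succ_pos M).trans_le hNK
    have hNε : 2 / (N : ℝ) ≤ ε := by
      rw [div_le_iff₀ hN0]
      rw [div_lt_iff₀ hε] at hM
      have : (M : ℝ) ≤ N := by exact_mod_cast (Nat.le_succ M).trans hNK
      nlinarith
    -- sums of `b` successive combinations of order `n`, each chosen small relative to the
    -- right end of the support of its predecessors
    have key : ∀ b : ℕ, ∃ (F : Finset ℕ) (c : ℕ → ℝ), (∀ k ∈ F, K' ≤ k) ∧ (∀ k, 0 ≤ c k) ∧
        ∑ k ∈ F, c k = b ∧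
        (∃ G : Fin b → Finset ℕ, (∀ r, G r ∈ Schreier n) ∧
          (∀ k l : Fin b, k < l → ∀ i ∈ G k, ∀ j ∈ G l, i < j) ∧
          F.image u = Finset.univ.biUnion G) ∧
        ∀ p < n + 1, ∀ A ⊆ F, TT v p A → ∑ k ∈ A, c k ≤ 1 + b / N := by
      intro b
      induction b with
      | zero =>
        refine ⟨∅, fun _ => 0, by simp, by simp, by simp, ⟨fun k => k.elim0, fun k => k.elim0,
          fun k => k.elim0, by simp⟩, ?_⟩
        intro p _ A hA _
        simp
      | succ b ihb =>
        obtain ⟨F, c, hFK, hc0, hcs, ⟨G, hG, hGord, hGu⟩, hsmall⟩ := ihb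
        set V := F.sup v with hV
        have hε' : (0 : ℝ) < 1 / (N * (V + 1)) := by positivity
        obtain ⟨F', c', hFK', hc0', hcs', hG', hsmall'⟩ :=
          ih (1 / (N * (V + 1))) hε' (max K' (F.sup id + 1))
        have hlt : ∀ k ∈ F, ∀ k' ∈ F', k < k' := by
          intro k hk k' hk'
          have h1 : k ≤ F.sup id := Finset.le_sup (f := id) hk
          have h2 := (le_max_right _ _).trans (hFK' k' hk')
          omega
        have hdisj : Disjoint F F' := by
          rw [Finset.disjoint_left]
          exact fun k hk hk' => lt_irrefl _ (hlt k hk k hk')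
        have hsum : ∀ A : Finset ℕ, ∑ k ∈ A, (if k ∈ F then c k else c' k) =
            ∑ k ∈ A ∩ F, c k + ∑ k ∈ A \ F, c' k := by
          intro A
          rw [Finset.sum_ite, Finset.filter_mem_eq_inter, Finset.sdiff_eq_filter]
        refine ⟨F ∪ F', fun k => if k ∈ F then c k else c' k, ?_, ?_, ?_, ?_, ?_⟩
        · intro k hk
          rcases Finset.mem_union.mp hk with h | h
          · exact hFK k h
          · exact (le_max_left _ _).trans (hFK' k h)
        · intro k
          dsimp only
          split_ifs
          · exact hc0 k
          · exact hc0' k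
        · rw [hsum, Finset.union_inter_cancel_left, Finset.union_sdiff_cancel_left hdisj, hcs, hcs']
          push_cast; ring
        · refine ⟨Fin.snoc (α := fun _ => Finset ℕ) G (F'.image u), ?_, ?_, ?_⟩
          · intro r
            refine Fin.lastCases ?_ (fun r => ?_) r
            · rw [Fin.snoc_last]; exact hG'
            · rw [Fin.snoc_castSucc]; exact hG r
          · have hGF : ∀ r, ∀ i ∈ G r, ∃ k ∈ F, u k = i := by
              intro r i hi
              have : i ∈ F.image u := by
                rw [hGu]; exact Finset.mem_biUnion.mpr ⟨r, Finset.mem_univ _, hi⟩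
              simpa using this
            intro k l
            refine Fin.lastCases ?_ (fun l => ?_) l
            · refine Fin.lastCases ?_ (fun k => ?_) k
              · intro h; exact absurd h (lt_irrefl _)
              · intro _ i hi j hj
                rw [Fin.snoc_castSucc] at hi
                rw [Fin.snoc_last] at hj
                obtain ⟨k1, hk1, rfl⟩ := hGF _ _ hi
                obtain ⟨k2, hk2, rfl⟩ := Finset.mem_image.mp hj
                exact hu (hlt _ hk1 _ hk2)
            · refine Fin.lastCases ?_ (fun k => ?_) k
              · intro h
                exact absurd h (not_lt.mpr (Fin.le_last _))
              · intro h i hi j hj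
                rw [Fin.snoc_castSucc] at hi hj
                exact hGord k l (by simpa using h) i hi j hj
          · rw [Finset.image_union, hGu]
            ext i
            simp only [Finset.mem_union, Finset.mem_biUnion, Finset.mem_univ, true_and]
            constructor
            · rintro (⟨r, hr⟩ | h)
              · exact ⟨r.castSucc, by rwa [Fin.snoc_castSucc]⟩
              · exact ⟨Fin.last b, by rwa [Fin.snoc_last]⟩
            · rintro ⟨r, hr⟩
              revert hr
              refine Fin.lastCases ?_ (fun r => ?_) r
              · rw [Fin.snoc_last]; exact Or.inr
              · rw [Fin.snoc_castSucc]; exact fun h => Or.inl ⟨r, h⟩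
        · intro p hp A hA hT
          rw [hsum]
          have hAF' : A \ F ⊆ F' := by
            intro k hk
            rw [Finset.mem_sdiff] at hk
            exact (Finset.mem_union.mp (hA hk.1)).resolve_left hk.2
          have hbN : (0 : ℝ) ≤ b / N := by positivity
          push_cast
          rw [add_div]
          by_cases hAF : (A ∩ F).Nonempty
          · obtain ⟨k0, hk0⟩ := hAF
            have hk0A := (Finset.mem_inter.mp hk0).1
            have hk0F := (Finset.mem_inter.mp hk0).2
            have h1 := hsmall p hp (A ∩ F) Finset.inter_subset_right
              (TT_subset hT Finset.inter_subset_left)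
            have h2 : ∑ k ∈ A \ F, c' k ≤ 1 / N := by
              cases p with
              | zero =>
                have hA1 : A.card ≤ 1 := hT
                have : A \ F = ∅ := by
                  rw [Finset.sdiff_eq_empty_iff_subset]
                  intro k hk
                  rwa [Finset.card_le_one.mp hA1 k hk k0 hk0A]
                rw [this, Finset.sum_empty]
                positivity
              | succ p =>
                obtain ⟨d, H, hH, hd, hcov⟩ := hT
                have hdV : (d : ℝ) ≤ V := by
                  exact_mod_cast (hd k0 hk0A).trans (Finset.le_sup (f := v) hk0F)
                calc ∑ k ∈ A \ F, c' k
                    ≤ ∑ k ∈ Finset.univ.biUnion (fun r => H r ∩ (A \ F)), c' k := by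
                      refine Finset.sum_le_sum_of_subset_of_nonneg ?_ (fun k _ _ => hc0' k)
                      intro k hk
                      obtain ⟨r, hr⟩ := hcov k (Finset.mem_sdiff.mp hk).1
                      exact Finset.mem_biUnion.mpr
                        ⟨r, Finset.mem_univ _, Finset.mem_inter.mpr ⟨hr, hk⟩⟩
                  _ ≤ ∑ r, ∑ k ∈ H r ∩ (A \ F), c' k :=
                      sum_biUnion_le _ _ hc0'
                  _ ≤ ∑ r : Fin d, 1 / ((N : ℝ) * (V + 1)) := by
                      refine Finset.sum_le_sum fun r _ => hsmall' p (by omega) _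
                        (Finset.inter_subset_right.trans hAF')
                        (TT_subset (hH r) Finset.inter_subset_left)
                  _ = d / ((N : ℝ) * (V + 1)) := by simp [div_eq_mul_inv]
                  _ ≤ 1 / N := by
                      rw [div_le_div_iff₀ (by positivity) hN0]
                      nlinarith
            linarith
          · rw [Finset.not_nonempty_iff_eq_empty.mp hAF, Finset.sum_empty, zero_add]
            have : ∑ k ∈ A \ F, c' k ≤ 1 := by
              rw [← hcs']
              exact Finset.sum_le_sum_of_subset_of_nonneg hAF' fun k _ _ => hc0' k
            have : (0 : ℝ) ≤ 1 / N := by positivity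
            linarith
    obtain ⟨F, c, hFK, hc0, hcs, ⟨G, hG, hGord, hGu⟩, hsmall⟩ := key N
    refine ⟨F, fun k => c k / N, fun k hk => (le_max_left _ _).trans (hFK k hk),
      fun k => div_nonneg (hc0 k) hN0.le, ?_, ⟨N, G, hG, hGord, ?_, hGu⟩, ?_⟩
    · rw [← Finset.sum_div, hcs, div_self hN0.ne']
    · intro i hi
      obtain ⟨k, hk, rfl⟩ := Finset.mem_image.mp hi
      exact hu.monotone (hFK k hk)
    · intro p hp A hA hT
      have := hsmall p hp A hA hT
      rw [div_self hN0.ne'] at this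
      rw [← Finset.sum_div]
      refine le_trans ?_ hNε
      exact div_le_div_of_nonneg_right (by linarith) hN0.le

/-! ### Restrictions of functionals and gaps -/

lemma schreier_image_spread {ι : Type*} [LinearOrder ι] {n : ℕ} (hn : 1 ≤ n) {I J : Finset ι}
    (hIJ : I ⊆ J) {u u' : ι → ℕ} (hu : StrictMonoOn u I) (hu' : StrictMonoOn u' I)
    (hle : ∀ k ∈ I, u k ≤ u' k) (hJ : J.image u ∈ Schreier n) : I.image u' ∈ Schreier n := by
  classical
  let φ : ℕ → ℕ := fun g => if h : ∃ k ∈ I, u' k = g then u h.choose else 0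
  have hφ : ∀ k ∈ I, φ (u' k) = u k := by
    intro k hk
    have h : ∃ k' ∈ I, u' k' = u' k := ⟨k, hk, rfl⟩
    have h2 := h.choose_spec
    simp only [φ, dif_pos h]
    rw [hu'.injOn h2.1 hk h2.2]
  refine schreier_spread hn hJ φ ?_ ?_ ?_
  · intro a ha b hb hab
    obtain ⟨k, hk, rfl⟩ := Finset.mem_image.mp ha
    obtain ⟨k', hk', rfl⟩ := Finset.mem_image.mp hb
    rw [hφ k hk, hφ k' hk']
    exact hu hk hk' ((hu'.lt_iff_lt hk hk').mp hab)
  · intro g hg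
    obtain ⟨k, hk, rfl⟩ := Finset.mem_image.mp hg
    rw [hφ k hk]
    exact Finset.mem_image_of_mem u (hIJ hk)
  · intro g hg
    obtain ⟨k, hk, rfl⟩ := Finset.mem_image.mp hg
    rw [hφ k hk]
    exact hle k hk

lemma one_le_sum_n (P : IWParams) {l : ℕ} (hl : 0 < l) (js : Fin l → ℕ) :
    1 ≤ ∑ i, P.n (js i) :=
  (one_le_n P (js ⟨0, hl⟩)).trans
    (Finset.single_le_sum (f := fun i => P.n (js i)) (fun _ _ => Nat.zero_le _)
      (Finset.mem_univ (⟨0, hl⟩ : Fin l)))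

lemma blocks_minSupp_lt {x y : c00} (h : Blocks x y) : minSupp x < minSupp y :=
  (minSupp_le_maxSupp x).trans_lt h

lemma support_subset_sum {d : ℕ} {f : Fin d → c00}
    (hb : ∀ q r : Fin d, q < r → Blocks (f q) (f r)) (q : Fin d) :
    (f q).support ⊆ (∑ q, f q).support := by
  intro i hi
  rw [Finsupp.mem_support_iff, Finsupp.finsetSum_apply, Finset.sum_eq_single q]
  · exact Finsupp.mem_support_iff.mp hi
  · intro r _ hr
    by_contra h
    exact hr (blocks_apply hb (Finsupp.mem_support_iff.mpr h) hi)
  · simp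

lemma filter_blocks {f g : c00} (h : Blocks f g) (E : Finset ℕ)
    (hg : (g.filter (· ∈ E)).support.Nonempty) :
    Blocks (f.filter (· ∈ E)) (g.filter (· ∈ E)) := by
  have hs : (g.filter (· ∈ E)).support ⊆ g.support := by
    rw [Finsupp.support_filter]; exact Finset.filter_subset _ _
  have hs' : (f.filter (· ∈ E)).support ⊆ f.support := by
    rw [Finsupp.support_filter]; exact Finset.filter_subset _ _
  exact (maxSupp_mono hs').trans_lt (h.trans_le (minSupp_le (hs (minSupp_mem hg))))

/-- The norming set is closed under restrictions to finite sets, with preservation of weights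
unless the restriction vanishes. -/
lemma WIW_filter {f : c00} {w : ℕ∞} (h : WIW P f w) (E : Finset ℕ) :
    f.filter (· ∈ E) = 0 ∨ WIW P (f.filter (· ∈ E)) w := by
  classical
  induction h with
  | unit i s hs =>
    by_cases hi : i ∈ E
    · right
      rw [Finsupp.filter_single_of_pos _ hi]
      exact WIW.unit i s hs
    · left
      rw [Finsupp.filter_single_of_neg _ hi]
  | op l hl js d f w hf hadm hvfg ih =>
    right
    have hsum : (((∏ i, P.m (js i) : ℕ) : ℝ)⁻¹ • ∑ q, f q).filter (· ∈ E) =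
        ((∏ i, P.m (js i) : ℕ) : ℝ)⁻¹ •
          ∑ q ∈ Finset.univ.filter (fun q => (f q).filter (· ∈ E) ≠ 0),
            (f q).filter (· ∈ E) := by
      rw [Finset.sum_filter_ne_zero, Finsupp.filter_smul]
      congr 1
      exact map_sum (Finsupp.filterAddHom (M := ℝ) (· ∈ E)) f Finset.univ
    rw [hsum]
    have hne : ∀ q ∈ Finset.univ.filter (fun q => (f q).filter (· ∈ E) ≠ 0),
        ((f q).filter (· ∈ E)).support.Nonempty := by
      intro q hq
      exact Finsupp.support_nonempty_iff.mpr (Finset.mem_filter.mp hq).2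
    have hs : ∀ q, ((f q).filter (· ∈ E)).support ⊆ (f q).support := by
      intro q
      rw [Finsupp.support_filter]; exact Finset.filter_subset _ _
    have hbl : ∀ q r, q < r → Blocks (f q) (f r) := hadm.2.1
    refine op_finset _ hl js _ w (fun q hq => (ih q).resolve_left (Finset.mem_filter.mp hq).2) hne
      (fun q hq r hr hqr => filter_blocks (hbl q r hqr) E (hne r hr)) ?_ ?_
    · intro q _ r _ hqr
      refine lt_of_le_of_lt ?_ (vfg_all hbl hvfg hqr)
      exact_mod_cast maxSupp_mono (hs q)
    · refine schreier_image_spread (one_le_sum_n P hl js) (Finset.subset_univ _) ?_ ?_ ?_ hadm.2.2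
      · intro q _ r _ hqr
        exact blocks_minSupp_lt (hbl q r hqr)
      · intro q hq r hr hqr
        exact blocks_minSupp_lt (filter_blocks (hbl q r hqr) E (hne r hr))
      · intro q hq
        exact minSupp_le (hs q (minSupp_mem (hne q hq)))

lemma ev_filter (f x : c00) : ev (f.filter (· ∈ x.support)) x = ev f x := by
  rw [ev_eq_sum_right, ev_eq_sum_right]
  refine Finset.sum_congr rfl fun i hi => ?_
  rw [Finsupp.filter_apply_pos _ _ hi]

/-- A nonzero value is attained by a functional of the same weight supported inside the vector. -/
lemma WIW_restrict {f x : c00} {w : ℕ∞} (h : WIW P f w) (hx : ev f x ≠ 0) :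
    ∃ g, WIW P g w ∧ g.support ⊆ x.support ∧ ev g x = ev f x := by
  refine ⟨f.filter (· ∈ x.support), ?_, ?_, ev_filter f x⟩
  · refine (WIW_filter h _).resolve_left fun h0 => hx ?_
    rw [← ev_filter, h0]; simp
  · rw [Finsupp.support_filter]
    exact fun i hi => (Finset.mem_filter.mp hi).2

/-! ### Lower ℓ₁ estimates -/

/-- If each `y k` has value at least `∏ m / 4` on the sum of an admissible very fast growing
family of pieces `h k q` inside its support, then all these pieces together form one such family of
complexity `n_j + ∑ n`, and dividing by `m_j ∏ m` gives a functional realizing the lower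
estimate. -/
lemma lower_of_pieces {y : ℕ → c00}
    (hb : ∀ k k', k < k' → Blocks (y k) (y k')) {l : ℕ} (js : Fin l → ℕ)
    (Q : ℕ → Finset ℕ) (h : ℕ → ℕ → c00) (wt : ℕ → ℕ → ℕ∞)
    (hW : ∀ k, ∀ q ∈ Q k, WIW P (h k q) (wt k q))
    (hhne : ∀ k, ∀ q ∈ Q k, (h k q).support.Nonempty)
    (hsub : ∀ k, ∀ q ∈ Q k, (h k q).support ⊆ (y k).support)
    (hbl : ∀ k, ∀ q ∈ Q k, ∀ r ∈ Q k, q < r → Blocks (h k q) (h k r))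
    (hvfg : ∀ k, ∀ q ∈ Q k, ∀ r ∈ Q k, q < r → (maxSupp (h k q) : ℕ∞) < wt k r)
    (hvfg' : ∀ k k', k < k' → ∀ q ∈ Q k', (maxSupp (y k) : ℕ∞) < wt k' q)
    (hS : ∀ k, (Q k).image (fun q => minSupp (h k q)) ∈ Schreier (∑ i, P.n (js i)))
    (hval : ∀ k, ((∏ i, P.m (js i) : ℕ) : ℝ) / 4 ≤ ∑ q ∈ Q k, ev (h k q) (y k))
    (j : ℕ) (F : Finset ℕ) (a : ℕ → ℝ) (ha : ∀ k, 0 ≤ a k)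
    (hF : F.image (fun k => minSupp (y k)) ∈ Schreier (P.n j)) :
    ∃ g w, WIW P g w ∧ (1 / 4) / (P.m j : ℝ) * ∑ k ∈ F, a k ≤ ev g (∑ k ∈ F, a k • y k) := by
  classical
  let I : Finset (ℕ ×ₗ ℕ) := F.biUnion fun k => (Q k).image fun q => toLex (k, q)
  have hI : ∀ p : ℕ ×ₗ ℕ, p ∈ I ↔ (ofLex p).1 ∈ F ∧ (ofLex p).2 ∈ Q (ofLex p).1 := by
    intro p
    simp only [I, Finset.mem_biUnion, Finset.mem_image]
    constructor
    · rintro ⟨k, hk, q, hq, rfl⟩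
      exact ⟨hk, hq⟩
    · rintro ⟨h1, h2⟩
      exact ⟨_, h1, _, h2, rfl⟩
  let f : ℕ ×ₗ ℕ → c00 := fun p => h (ofLex p).1 (ofLex p).2
  let js' : Fin (l + 1) → ℕ := Fin.cons j js
  have hw' : (∏ i, P.m (js' i)) = P.m j * ∏ i, P.m (js i) := by
    rw [Fin.prod_univ_succ]; simp [js']
  have hn' : (∑ i, P.n (js' i)) = P.n j + ∑ i, P.n (js i) := by
    rw [Fin.sum_univ_succ]; simp [js']
  have hu : StrictMono fun k => minSupp (y k) := fun k k' hkk => blocks_minSupp_lt (hb k k' hkk)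
  have hlt : ∀ k k', k < k' → ∀ q ∈ Q k, ∀ r ∈ Q k', Blocks (h k q) (h k' r) := by
    intro k k' hkk q hq r hr
    exact (maxSupp_mono (hsub k q hq)).trans_lt ((hb k k' hkk).trans_le
      (minSupp_le (hsub k' r hr (minSupp_mem (hhne k' r hr)))))
  have key := op_finset (P := P) I (Nat.succ_pos l) js' f (fun p => wt (ofLex p).1 (ofLex p).2)
    ?_ ?_ ?_ ?_ ?_
  · refine ⟨_, _, key, ?_⟩
    have hsumI : ∑ p ∈ I, f p = ∑ k ∈ F, ∑ q ∈ Q k, h k q := by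
      rw [Finset.sum_biUnion]
      · refine Finset.sum_congr rfl fun k _ => ?_
        refine Finset.sum_image fun q _ q' _ hqq => ?_
        have := congrArg (fun p => (ofLex p).2) hqq
        simpa using this
      · intro k _ k' _ hkk
        rw [Function.onFun, Finset.disjoint_left]
        intro p hp hp'
        obtain ⟨q, _, rfl⟩ := Finset.mem_image.mp hp
        obtain ⟨q', _, h'⟩ := Finset.mem_image.mp hp'
        have := congrArg (fun p => (ofLex p).1) h'
        exact hkk (by simpa using this.symm)
    have hdisj : ∀ k ∈ F, ev (∑ k' ∈ F, ∑ q ∈ Q k', h k' q) (y k) =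
        ∑ q ∈ Q k, ev (h k q) (y k) := by
      intro k hk
      rw [map_sum, LinearMap.sum_apply, Finset.sum_eq_single k]
      · rw [map_sum, LinearMap.sum_apply]
      · intro k' _ hkk
        rw [map_sum, LinearMap.sum_apply]
        refine Finset.sum_eq_zero fun q hq => ev_eq_zero fun i hi hi' => ?_
        have hi2 := hsub k' q hq hi
        rcases lt_or_gt_of_ne hkk with h1 | h1
        · exact lt_irrefl _ (blocks_lt (hb _ _ h1) hi2 hi')
        · exact lt_irrefl _ (blocks_lt (hb _ _ h1) hi' hi2)
      · exact fun h => absurd hk h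
    have hmj : (0 : ℝ) < P.m j := by exact_mod_cast (zero_lt_two.trans_le (two_le_m P j))
    have hw0 : (0 : ℝ) < ((∏ i, P.m (js i) : ℕ) : ℝ) := by
      exact_mod_cast (pow_pos zero_lt_two l).trans_le (two_pow_le_prod P js)
    rw [hsumI, hw', map_smul, LinearMap.smul_apply, map_sum, Finset.mul_sum, smul_eq_mul,
      Finset.mul_sum]
    refine Finset.sum_le_sum fun k hk => ?_
    rw [map_smul, hdisj k hk, smul_eq_mul]
    push_cast
    have h1 := mul_le_mul_of_nonneg_left (hval k) (ha k)
    rw [mul_inv]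
    push_cast at h1 hw0
    have h2 : (1 / 4) / (P.m j : ℝ) * a k =
        ((P.m j : ℝ)⁻¹ * (∏ i, (P.m (js i) : ℝ))⁻¹) * (a k * ((∏ i, (P.m (js i) : ℝ)) / 4)) := by
      field_simp
    rw [h2]
    exact mul_le_mul_of_nonneg_left h1 (by positivity)
  · intro p hp
    exact hW _ _ ((hI p).mp hp).2
  · intro p hp
    exact hhne _ _ ((hI p).mp hp).2
  · intro p hp r hr hpr
    rcases Prod.Lex.lt_iff.mp hpr with h1 | ⟨h1, h2⟩
    · exact hlt _ _ h1 _ ((hI p).mp hp).2 _ ((hI r).mp hr).2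
    · have h3 := ((hI r).mp hr).2
      have h4 := ((hI p).mp hp).2
      simp only [f]
      rw [← h1] at h3 ⊢
      exact hbl _ _ h4 _ h3 h2
  · intro p hp r hr hpr
    rcases Prod.Lex.lt_iff.mp hpr with h1 | ⟨h1, h2⟩
    · refine lt_of_le_of_lt ?_ (hvfg' _ _ h1 _ ((hI r).mp hr).2)
      exact_mod_cast maxSupp_mono (hsub _ _ ((hI p).mp hp).2)
    · have h3 := ((hI r).mp hr).2
      have h4 := ((hI p).mp hp).2
      simp only [f]
      rw [← h1] at h3 ⊢
      exact hvfg _ _ h4 _ h3 h2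
  · rw [hn']
    have := schreier_comp (hu.strictMonoOn _) hF (fun k _ => hS k) ?_ ?_
    · convert this using 1
      ext i
      simp only [I, f, Finset.mem_image, Finset.mem_biUnion]
      constructor
      · rintro ⟨p, ⟨k, hk, q, hq, rfl⟩, rfl⟩
        exact ⟨k, hk, q, hq, rfl⟩
      · rintro ⟨k, hk, q, hq, rfl⟩
        exact ⟨_, ⟨k, hk, q, hq, rfl⟩, rfl⟩
    · intro k _ i hi
      obtain ⟨q, hq, rfl⟩ := Finset.mem_image.mp hi
      exact minSupp_le (hsub k q hq (minSupp_mem (hhne k q hq)))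
    · intro k _ k' _ hkk i hi i' hi'
      obtain ⟨q, hq, rfl⟩ := Finset.mem_image.mp hi
      obtain ⟨q', hq', rfl⟩ := Finset.mem_image.mp hi'
      exact blocks_minSupp_lt (hlt k k' hkk q hq q' hq')

/-- Every normalized block sequence has a subsequence satisfying a lower `ℓ₁` estimate, with
constant `1 / (4 m_j)`, on sets that are `S_{n_j}`-admissible.  Norming functionals whose weights
are unbounded can be used directly; if the weights stay bounded, one passes to functionals with a
constant weight and merges them, after dropping the first piece of each. -/
lemma lower_l1 {y : ℕ → c00}
    (hb : ∀ k, Blocks (y k) (y (k + 1))) (hn : ∀ k, iwNorm P (y k) = 1) :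
    ∃ φ : ℕ → ℕ, StrictMono φ ∧ ∀ (j : ℕ) (F : Finset ℕ) (a : ℕ → ℝ), (∀ k, 0 ≤ a k) →
      F.image (fun k => minSupp (y (φ k))) ∈ Schreier (P.n j) →
      ∃ g w, WIW P g w ∧
        (1 / 4) / (P.m j : ℝ) * ∑ k ∈ F, a k ≤ ev g (∑ k ∈ F, a k • y (φ k)) := by
  classical
  have hex : ∀ k, ∃ f w, WIW P f w ∧ f.support ⊆ (y k).support ∧ 3 / 4 < ev f (y k) := by
    intro k
    obtain ⟨f, w, hf, hlt⟩ := exists_lt_ev (P := P) (x := y k) (B := 3 / 4) (by rw [hn]; norm_num)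
    obtain ⟨g, hg, hs, he⟩ := WIW_restrict hf (x := y k) (by linarith)
    exact ⟨g, w, hg, hs, he ▸ hlt⟩
  choose f w hf hfs hfv using hex
  have hfne : ∀ k, (f k).support.Nonempty := by
    intro k
    obtain ⟨i, hi, -⟩ := ev_ne_zero (f := f k) (x := y k) (by linarith [hfv k])
    exact ⟨i, hi⟩
  have hbl : ∀ {a b : ℕ}, a < b → Blocks (y a) (y b) := fun hab => blocks_of_lt hb hab
  by_cases hcase : ∀ N K : ℕ, ∃ k, K < k ∧ (N : ℕ∞) < w k
  · choose nx hnx1 hnx2 using hcase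
    let φ : ℕ → ℕ := fun k => Nat.rec 0 (fun _ p => nx (maxSupp (y p)) p) k
    have hφs : ∀ k, φ (k + 1) = nx (maxSupp (y (φ k))) (φ k) := fun k => rfl
    have hφ : StrictMono φ := strictMono_nat_of_lt_succ fun k => by rw [hφs]; exact hnx1 _ _
    refine ⟨φ, hφ, lower_of_pieces (y := fun k => y (φ k))
      (fun k k' hkk => hbl (hφ hkk)) (l := 0) (fun i => i.elim0) (fun _ => {0})
      (fun k _ => f (φ k)) (fun k _ => w (φ k)) (fun k _ _ => hf _) (fun k _ _ => hfne _)
      (fun k _ _ => hfs _) ?_ ?_ ?_ ?_ ?_⟩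
    · intro k q hq r hr hqr
      simp only [Finset.mem_singleton] at hq hr
      omega
    · intro k q hq r hr hqr
      simp only [Finset.mem_singleton] at hq hr
      omega
    · intro k k' hkk q _
      obtain ⟨r, rfl⟩ := Nat.exists_eq_add_of_lt hkk
      rw [hφs]
      refine lt_of_le_of_lt ?_ (hnx2 _ _)
      rcases Nat.eq_zero_or_pos r with h0 | h0
      · subst h0; exact le_rfl
      · have := hbl (hφ (show k < k + r by omega))
        exact_mod_cast (this.trans_le (minSupp_le_maxSupp _)).le
    · intro k
      exact ⟨minSupp (f (φ k)), by simp⟩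
    · intro k
      simp only [Finset.univ_eq_empty, Finset.prod_empty, Finset.sum_singleton]
      push_cast
      linarith [hfv (φ k)]
  · push Not at hcase
    obtain ⟨N, K, hNK⟩ := hcase
    -- the finitely many possible shapes of representations of weight at most `N`
    have hrep : ∀ k, K < k → ∃ (τ : Σ l : Fin (N + 1), (Fin l → Fin (N + 1))) (d : ℕ)
        (h : Fin d → c00) (wt : Fin d → ℕ∞), 0 < (τ.1 : ℕ) ∧ (∀ q, WIW P (h q) (wt q)) ∧
        Admissible (Schreier (∑ i, P.n (τ.2 i))) h ∧
        (∀ q r : Fin d, (q : ℕ) + 1 = (r : ℕ) → (maxSupp (h q) : ℕ∞) < wt r) ∧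
        f k = ((∏ i, P.m (τ.2 i) : ℕ) : ℝ)⁻¹ • ∑ q, h q := by
      intro k hk
      have h1 := hf k
      have h2 := hNK k hk
      generalize f k = g at h1
      generalize w k = v at h1 h2
      cases h1 with
      | unit i s hs => simp at h2
      | op l hl js d h wt hW hadm hv =>
        have hN : (∏ i, P.m (js i)) ≤ N := by exact_mod_cast h2
        have hlN : l < N + 1 :=
          Nat.lt_succ_of_le ((Nat.lt_two_pow_self.le.trans (two_pow_le_prod P js)).trans hN)
        have hjN : ∀ i, js i < N + 1 := fun i =>
          Nat.lt_succ_of_le ((P.m_mono.le_apply.trans (m_le_prod P js i)).trans hN)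
        exact ⟨⟨⟨l, hlN⟩, fun i => ⟨js i, hjN i⟩⟩, d, h, wt, hl, hW, hadm, hv, rfl⟩
    have hrep' : ∀ k, ∃ (τ : Σ l : Fin (N + 1), (Fin l → Fin (N + 1))), ∃ (d : ℕ)
        (h : Fin d → c00) (wt : Fin d → ℕ∞), 0 < (τ.1 : ℕ) ∧ (∀ q, WIW P (h q) (wt q)) ∧
        Admissible (Schreier (∑ i, P.n (τ.2 i))) h ∧
        (∀ q r : Fin d, (q : ℕ) + 1 = (r : ℕ) → (maxSupp (h q) : ℕ∞) < wt r) ∧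
        f (K + 1 + k) = ((∏ i, P.m (τ.2 i) : ℕ) : ℝ)⁻¹ • ∑ q, h q :=
      fun k => hrep (K + 1 + k) (by omega)
    choose τ hτ using hrep'
    obtain ⟨t, ht⟩ := Finite.exists_infinite_fiber τ
    have htinf : (τ ⁻¹' {t}).Infinite := Set.infinite_coe_iff.mp ht
    let ψ : ℕ → ℕ := Nat.nth (· ∈ τ ⁻¹' {t})
    have hψ : StrictMono ψ := Nat.nth_strictMono htinf
    have hψt : ∀ k, τ (ψ k) = t := fun k => Nat.nth_mem_of_infinite htinf k
    let φ : ℕ → ℕ := fun k => K + 1 + ψ k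
    have hφ : StrictMono φ := fun a b hab => Nat.add_lt_add_left (hψ hab) _
    have hdat : ∀ k, ∃ (d : ℕ)
        (h : Fin d → c00) (wt : Fin d → ℕ∞), 0 < (t.1 : ℕ) ∧ (∀ q, WIW P (h q) (wt q)) ∧
        Admissible (Schreier (∑ i, P.n (t.2 i))) h ∧
        (∀ q r : Fin d, (q : ℕ) + 1 = (r : ℕ) → (maxSupp (h q) : ℕ∞) < wt r) ∧
        f (φ k) = ((∏ i, P.m (t.2 i) : ℕ) : ℝ)⁻¹ • ∑ q, h q := by
      intro k
      have := hτ (ψ k)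
      rw [hψt k] at this
      exact this
    choose d h wt hl hW hadm hv hfeq using hdat
    have hl0 : 0 < (t.1 : ℕ) := hl 0
    set w0 := ∏ i, P.m (t.2 i) with hw0
    have hw2 : 2 ≤ w0 := two_le_prod P hl0 _
    have hw2' : (2 : ℝ) ≤ w0 := by exact_mod_cast hw2
    have hsub : ∀ k q, (h k q).support ⊆ (y (φ k)).support := by
      intro k q
      refine (support_subset_sum (hadm k).2.1 q).trans ((?_ : _ ⊆ (f (φ k)).support).trans (hfs _))
      rw [hfeq k]
      exact (Finsupp.support_smul_eq (by positivity)).ge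
    have hdne : ∀ k, 0 < d k := by
      intro k
      rcases Nat.eq_zero_or_pos (d k) with h0 | h0
      · exfalso
        have : f (φ k) = 0 := by
          rw [hfeq k]
          have : IsEmpty (Fin (d k)) := by rw [h0]; infer_instance
          simp
        have h1 := hfne (φ k)
        rw [this] at h1
        simp at h1
      · exact h0
    let H : ℕ → ℕ → c00 := fun k q => if hq : q < d k then h k ⟨q, hq⟩ else 0
    let V : ℕ → ℕ → ℕ∞ := fun k q => if hq : q < d k then wt k ⟨q, hq⟩ else 0
    have hH : ∀ k q (hq : q < d k), H k q = h k ⟨q, hq⟩ := fun k q hq => dif_pos hq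
    have hV : ∀ k q (hq : q < d k), V k q = wt k ⟨q, hq⟩ := fun k q hq => dif_pos hq
    refine ⟨φ, hφ, lower_of_pieces (y := fun k => y (φ k))
      (fun k k' hkk => hbl (hφ hkk)) (fun i => (t.2 i : ℕ)) (fun k => Finset.Ico 1 (d k))
      H V ?_ ?_ ?_ ?_ ?_ ?_ ?_ ?_⟩
    · intro k q hq
      have hq' := (Finset.mem_Ico.mp hq).2
      rw [hH k q hq', hV k q hq']
      exact hW k _
    · intro k q hq
      rw [hH k q (Finset.mem_Ico.mp hq).2]
      exact (hadm k).1 _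
    · intro k q hq
      rw [hH k q (Finset.mem_Ico.mp hq).2]
      exact hsub k _
    · intro k q hq r hr hqr
      rw [hH k q (Finset.mem_Ico.mp hq).2, hH k r (Finset.mem_Ico.mp hr).2]
      exact (hadm k).2.1 _ _ hqr
    · intro k q hq r hr hqr
      rw [hH k q (Finset.mem_Ico.mp hq).2, hV k r (Finset.mem_Ico.mp hr).2]
      exact vfg_all (hadm k).2.1 (hv k) hqr
    · intro k k' hkk q hq
      rw [Finset.mem_Ico] at hq
      rw [hV k' q hq.2]
      have h0 : (⟨0, hdne k'⟩ : Fin (d k')) < ⟨q, hq.2⟩ := hq.1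
      refine lt_of_le_of_lt ?_ (vfg_all (hadm k').2.1 (hv k') h0)
      have h1 := (hadm k').1 ⟨0, hdne k'⟩
      have h2 := minSupp_le (hsub k' _ (minSupp_mem h1))
      have h3 := minSupp_le_maxSupp (h k' ⟨0, hdne k'⟩)
      have h4 : maxSupp (y (φ k)) < minSupp (y (φ k')) := hbl (hφ hkk)
      exact_mod_cast (h4.trans_le (h2.trans h3)).le
    · intro k
      have h1 : (Finset.Ico 1 (d k)).image (fun q => minSupp (H k q)) =
          ((Finset.univ : Finset (Fin (d k))).filter (fun q : Fin (d k) => 1 ≤ (q : ℕ))).image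
            (fun q => minSupp (h k q)) := by
        ext i
        simp only [Finset.mem_image, Finset.mem_Ico, Finset.mem_filter, Finset.mem_univ, true_and]
        constructor
        · rintro ⟨q, ⟨h1, h2⟩, rfl⟩
          exact ⟨⟨q, h2⟩, h1, by rw [hH k q h2]⟩
        · rintro ⟨q, h1, rfl⟩
          exact ⟨q, ⟨h1, q.2⟩, by rw [hH k q q.2]⟩
      rw [h1]
      have hmono : StrictMono fun q => minSupp (h k q) :=
        fun q r hqr => blocks_minSupp_lt ((hadm k).2.1 q r hqr)
      exact schreier_image_spread (one_le_sum_n P hl0 _) (Finset.subset_univ _)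
        (hmono.strictMonoOn _) (hmono.strictMonoOn _) (fun _ _ => le_rfl) (hadm k).2.2
    · intro k
      have h1 : ∑ q ∈ Finset.range (d k), ev (H k q) (y (φ k)) = w0 * ev (f (φ k)) (y (φ k)) := by
        rw [Finset.sum_range, hfeq k, map_smul, LinearMap.smul_apply, map_sum,
          LinearMap.sum_apply, smul_eq_mul, mul_inv_cancel_left₀ (by positivity)]
        exact Finset.sum_congr rfl fun q _ => by rw [hH k q q.2]
      have h2 : ∑ q ∈ Finset.range (d k), ev (H k q) (y (φ k)) =
          ev (H k 0) (y (φ k)) + ∑ q ∈ Finset.Ico 1 (d k), ev (H k q) (y (φ k)) := by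
        rw [Finset.range_eq_Ico, Finset.sum_eq_sum_Ico_succ_bot (hdne k)]
      have h3 : ev (H k 0) (y (φ k)) ≤ 1 := by
        rw [hH k 0 (hdne k), ← hn (φ k)]
        exact ev_le_iwNorm (hW k _) _
      have h4 := hfv (φ k)
      rw [h1] at h2
      show ((w0 : ℕ) : ℝ) / 4 ≤ _
      nlinarith

/-! ### Estimates on averages of blocks -/

/-- The indices `k ∈ F` whose interval `[u k, v k]` contains the left end of some `f q`. -/
noncomputable def hitSet {d : ℕ} (f : Fin d → c00) (u v : ℕ → ℕ) (F : Finset ℕ) : Finset ℕ :=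
  open Classical in F.filter fun k => ∃ q, u k ≤ minSupp (f q) ∧ minSupp (f q) ≤ v k

lemma hitSet_subset {d : ℕ} (f : Fin d → c00) (u v : ℕ → ℕ) (F : Finset ℕ) :
    hitSet f u v F ⊆ F := Finset.filter_subset _ _

/-- Distinct intervals contain distinct left ends, so the set of indices hit by an
`S_n`-admissible sequence is of complexity `n`. -/
lemma hitSet_TT {d n : ℕ} {f : Fin d → c00} (hf : Admissible (Schreier n) f) {u v : ℕ → ℕ}
    (huv : ∀ k k', k < k' → v k < u k') (F : Finset ℕ) : TT v n (hitSet f u v F) := by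
  classical
  rcases Nat.eq_zero_or_pos d with h0 | h0
  · have : hitSet f u v F = ∅ := by
      subst h0
      simp [hitSet]
    rw [this]
    cases n with
    | zero => simp [TT]
    | succ n => exact ⟨0, fun r => r.elim0, fun r => r.elim0, by simp, by simp⟩
  · let φ : ℕ → Fin d := fun k =>
      if h : ∃ q, u k ≤ minSupp (f q) ∧ minSupp (f q) ≤ v k then h.choose else ⟨0, h0⟩
    have hφ : ∀ k ∈ hitSet f u v F, u k ≤ minSupp (f (φ k)) ∧ minSupp (f (φ k)) ≤ v k := by
      intro k hk
      have h : ∃ q, u k ≤ minSupp (f q) ∧ minSupp (f q) ≤ v k := (Finset.mem_filter.mp hk).2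
      simp only [φ, dif_pos h]
      exact h.choose_spec
    refine TT_of_admissible hf φ ?_ fun k hk => (hφ k hk).2
    intro k hk k' hk' hkk
    have h1 := hφ k hk
    have h2 := hφ k' hk'
    rw [← hkk] at h2
    by_contra hne
    rcases lt_or_gt_of_ne hne with h | h
    · have := huv _ _ h; omega
    · have := huv _ _ h; omega

/-- A vector whose interval contains no left end of the `f q` is acted upon by at most one `f q`. -/
lemma unique_of_not_hit {d : ℕ} {f : Fin d → c00}
    (hb : ∀ q r : Fin d, q < r → Blocks (f q) (f r)) {u v : ℕ → ℕ} {F : Finset ℕ} {k : ℕ}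
    (hkF : k ∈ F) (hk : k ∉ hitSet f u v F) {x : c00}
    (hx : ∀ i ∈ x.support, u k ≤ i ∧ i ≤ v k) {q r : Fin d} (hq : ev (f q) x ≠ 0)
    (hr : ev (f r) x ≠ 0) : q = r := by
  classical
  have key : ∀ q r : Fin d, ev (f q) x ≠ 0 → ev (f r) x ≠ 0 → ¬ q < r := by
    intro q r hq hr hqr
    obtain ⟨i, hi, hix⟩ := ev_ne_zero hq
    obtain ⟨i', hi', hix'⟩ := ev_ne_zero hr
    refine hk (Finset.mem_filter.mpr ⟨hkF, r, ?_, (minSupp_le hi').trans (hx i' hix').2⟩)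
    exact (hx i hix).1.trans ((le_maxSupp hi).trans (hb q r hqr).le)
  exact le_antisymm (not_lt.mp (key r q hr hq)) (not_lt.mp (key q r hq hr))

lemma abs_sum_split_le {F A : Finset ℕ} {e t : ℕ → ℝ} {a b ε : ℝ} (he : ∀ k, 0 ≤ e k)
    (hsum : ∑ k ∈ F, e k = 1) (hA : A ⊆ F) (hε : ∑ k ∈ A, e k ≤ ε) (ha : 0 ≤ a) (hb : 0 ≤ b)
    (hta : ∀ k ∈ A, |t k| ≤ a) (htb : ∀ k ∈ F, k ∉ A → |t k| ≤ b) :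
    |∑ k ∈ F, e k * t k| ≤ ε * a + b := by
  classical
  calc |∑ k ∈ F, e k * t k| ≤ ∑ k ∈ F, |e k * t k| := Finset.abs_sum_le_sum_abs _ _
    _ = ∑ k ∈ F, e k * |t k| := by simp only [abs_mul, abs_of_nonneg (he _)]
    _ = ∑ k ∈ F \ A, e k * |t k| + ∑ k ∈ A, e k * |t k| := (Finset.sum_sdiff hA).symm
    _ ≤ ∑ k ∈ F \ A, e k * b + ∑ k ∈ A, e k * a := by
        refine add_le_add (Finset.sum_le_sum fun k hk => ?_) (Finset.sum_le_sum fun k hk => ?_)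
        · rw [Finset.mem_sdiff] at hk
          exact mul_le_mul_of_nonneg_left (htb k hk.1 hk.2) (he k)
        · exact mul_le_mul_of_nonneg_left (hta k hk) (he k)
    _ = (∑ k ∈ F \ A, e k) * b + (∑ k ∈ A, e k) * a := by rw [Finset.sum_mul, Finset.sum_mul]
    _ ≤ 1 * b + ε * a := by
        refine add_le_add (mul_le_mul_of_nonneg_right ?_ hb) (mul_le_mul_of_nonneg_right hε ha)
        rw [← hsum]
        exact Finset.sum_le_sum_of_subset_of_nonneg Finset.sdiff_subset fun k _ _ => he k
    _ = ε * a + b := by ring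

lemma sum_n_le (P : IWParams) {l N : ℕ} (js : Fin l → ℕ) (h : (∏ i, P.m (js i)) ≤ N) :
    (∑ i, P.n (js i)) ≤ N * P.n N := by
  have hl : l ≤ N := (Nat.lt_two_pow_self.le.trans (two_pow_le_prod P js)).trans h
  calc (∑ i, P.n (js i)) ≤ ∑ _i : Fin l, P.n N :=
        Finset.sum_le_sum fun i _ => P.n_mono.monotone
          ((P.m_mono.le_apply.trans (m_le_prod P js i)).trans h)
    _ = l * P.n N := by simp
    _ ≤ N * P.n N := Nat.mul_le_mul_right _ hl

lemma ev_sum_smul {ι : Type*} (g : c00) (F : Finset ι) (e : ι → ℝ) (x : ι → c00) :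
    ev g (∑ k ∈ F, e k • x k) = ∑ k ∈ F, e k * ev g (x k) := by
  rw [map_sum]
  exact Finset.sum_congr rfl fun k _ => by rw [map_smul, smul_eq_mul]

/-- Functionals of small weight `w` are at most `1 / w + ε` on special convex combinations of
successive vectors of norm at most one. -/
lemma small_weight_le {N : ℕ} {u v : ℕ → ℕ} (huv : ∀ k k', k < k' → v k < u k')
    {x : ℕ → c00} (hx : ∀ k, ∀ i ∈ (x k).support, u k ≤ i ∧ i ≤ v k)
    (hx1 : ∀ k g w, WIW P g w → |ev g (x k)| ≤ 1) {F : Finset ℕ} {e : ℕ → ℝ} {ε : ℝ}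
    (he : ∀ k, 0 ≤ e k) (hsum : ∑ k ∈ F, e k = 1)
    (hsmall : ∀ p < N * P.n N + 1, ∀ A ⊆ F, TT v p A → ∑ k ∈ A, e k ≤ ε)
    {g : c00} {w : ℕ} (hg : WIW P g w) (hw : w ≤ N) :
    |ev g (∑ k ∈ F, e k • x k)| ≤ 1 / w + ε := by
  have hg' := hg
  generalize hw' : (w : ℕ∞) = w' at hg'
  cases hg' with
  | unit i s hs => simp at hw'
  | op l hl js d f wt hf hadm hv =>
    have hw'' : w = ∏ i, P.m (js i) := by exact_mod_cast hw'
    rw [ev_sum_smul]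
    have h2 := abs_sum_split_le (t := fun k => ev (((∏ i, P.m (js i) : ℕ) : ℝ)⁻¹ • ∑ q, f q) (x k))
      he hsum (hitSet_subset f u v F)
      (hsmall _ (Nat.lt_succ_of_le (sum_n_le P js (hw''.symm.le.trans hw))) _
        (hitSet_subset f u v F) (hitSet_TT hadm huv F)) zero_le_one
      (show (0 : ℝ) ≤ 1 / w by positivity) ?_ ?_
    · linarith
    · intro k _
      exact hx1 k _ _ hg
    · intro k hkF hk
      rw [map_smul, LinearMap.smul_apply, smul_eq_mul, map_sum, LinearMap.sum_apply, abs_mul,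
        ← hw'', abs_of_nonneg (by positivity), ← one_div]
      refine mul_le_of_le_one_right (by positivity) ?_
      exact abs_sum_le_of_unique zero_le_one (fun q => hx1 k _ _ (hf q))
        fun q r hq hr => unique_of_not_hit hadm.2.1 hkF hk (hx k) hq hr

lemma support_sum_subset {ι : Type*} (F : Finset ι) (e : ι → ℝ) (x : ι → c00) {i : ℕ}
    (hi : i ∈ (∑ k ∈ F, e k • x k).support) : ∃ k ∈ F, i ∈ (x k).support := by
  by_contra h
  push Not at h
  refine Finsupp.mem_support_iff.mp hi ?_
  rw [Finsupp.finsetSum_apply]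
  refine Finset.sum_eq_zero fun k hk => ?_
  rw [Finsupp.smul_apply, Finsupp.notMem_support_iff.mp (h k hk), smul_zero]

/-- Vectors in every block subspace on which functionals of small weight are small: a James type
argument, based on iterating special convex combinations and on the lower `ℓ₁` estimate. -/
lemma exists_good {y : ℕ → c00} (hne : ∀ k, (y k).support.Nonempty)
    (hb : ∀ k, Blocks (y k) (y (k + 1))) (hn : ∀ k, iwNorm P (y k) = 1) {C : ℝ} (hC : 1 < C)
    (N K : ℕ) {η : ℝ} (hη : 0 < η) :
    ∃ z f w, z ∈ Submodule.span ℝ (Set.range y) ∧ (∀ i ∈ z.support, K ≤ i) ∧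
      (∀ g w, WIW P g w → |ev g z| ≤ C) ∧ WIW P f w ∧ ev f z = 1 ∧
      ∀ (g : c00) (w : ℕ), WIW P g w → w ≤ N → |ev g z| ≤ C / w + η := by
  classical
  by_contra hcon
  obtain ⟨φ, hφ, hlow⟩ := lower_l1 (P := P) (y := fun k => y (k + 1)) (fun k => hb _)
    (fun k => hn _)
  set y' : ℕ → c00 := fun k => y (φ k + 1) with hy'
  have hb' : ∀ k k', k < k' → Blocks (y' k) (y' k') :=
    fun k k' hkk => blocks_of_lt hb (Nat.succ_lt_succ (hφ hkk))
  have hne' : ∀ k, (y' k).support.Nonempty := fun k => hne _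
  have hn' : ∀ k g w, WIW P g w → |ev g (y' k)| ≤ 1 := by
    intro k g w hg
    rw [← hn (φ k + 1)]
    exact abs_ev_le_iwNorm hg _
  set u0 : ℕ → ℕ := fun k => minSupp (y' k) with hu0
  have hu0m : StrictMono u0 := fun k k' hkk => blocks_minSupp_lt (hb' k k' hkk)
  have hu01 : ∀ k, 1 ≤ u0 k := by
    intro k
    have : maxSupp (y 0) < u0 k := blocks_of_lt hb (Nat.succ_pos _)
    omega
  set n := N * P.n N + 1 with hndef
  have hn1 : 1 ≤ n := Nat.succ_pos _
  let T : (ℕ →₀ ℝ) →ₗ[ℝ] c00 := Finsupp.linearCombination ℝ y'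
  let S : (ℕ →₀ ℝ) →ₗ[ℝ] ℝ := Finsupp.linearCombination ℝ (fun _ => (1 : ℝ))
  have hTsum : ∀ c, T c = ∑ k ∈ c.support, c k • y' k := fun c => rfl
  have hSsum : ∀ c, S c = ∑ k ∈ c.support, c k := by
    intro c
    simp [S, Finsupp.linearCombination_apply, Finsupp.sum]
  have hTspan : ∀ c, T c ∈ Submodule.span ℝ (Set.range y) := by
    intro c
    rw [hTsum]
    exact Submodule.sum_mem _ fun k _ => Submodule.smul_mem _ _ (Submodule.subset_span ⟨_, rfl⟩)
  have hC0 : 0 < C := by linarith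
  have main : ∀ p : ℕ, ∀ K' ≥ K, ∃ c : ℕ →₀ ℝ, (∀ k ∈ c.support, K' ≤ k) ∧ (∀ k, 0 ≤ c k) ∧
      C ^ p ≤ S c ∧ c.support.image u0 ∈ Schreier (n * p) ∧
      ∀ g w, WIW P g w → |ev g (T c)| ≤ 1 := by
    intro p
    induction p with
    | zero =>
      intro K' _
      have hs : (Finsupp.single K' (1 : ℝ)).support = {K'} :=
        Finsupp.support_single _ one_ne_zero
      refine ⟨Finsupp.single K' 1, ?_, ?_, ?_, ?_, ?_⟩
      · rw [hs]; simp
      · intro k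
        rw [Finsupp.single_apply]
        split_ifs <;> norm_num
      · simp [S]
      · rw [hs]
        exact ⟨u0 K', by simp⟩
      · intro g w hg
        have : T (Finsupp.single K' 1) = y' K' := by simp [T]
        rw [this]
        exact hn' K' g w hg
    | succ p ih =>
      intro K' hK'
      have ih' : ∀ k, ∃ c : ℕ →₀ ℝ, K ≤ k → (∀ k' ∈ c.support, k ≤ k') ∧ (∀ k, 0 ≤ c k) ∧
          C ^ p ≤ S c ∧ c.support.image u0 ∈ Schreier (n * p) ∧
          ∀ g w, WIW P g w → |ev g (T c)| ≤ 1 := by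
        intro k
        by_cases hk : K ≤ k
        · obtain ⟨c, hc⟩ := ih k hk
          exact ⟨c, fun _ => hc⟩
        · exact ⟨0, fun h => absurd h hk⟩
      choose cc hcc using ih'
      let b : ℕ → ℕ := fun k => (cc k).support.sup id
      let κ : ℕ → ℕ := fun r => Nat.rec K' (fun _ k => b k + 1) r
      have hκs : ∀ r, κ (r + 1) = b (κ r) + 1 := fun r => rfl
      have hbk : ∀ k, K ≤ k → k ≤ b k := by
        intro k hk
        have hpos : 0 < S (cc k) := (pow_pos hC0 p).trans_le (hcc k hk).2.2.1
        have : (cc k).support.Nonempty := by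
          rw [Finset.nonempty_iff_ne_empty]
          intro h0
          rw [hSsum, h0] at hpos
          simp at hpos
        obtain ⟨k', hk'⟩ := this
        exact ((hcc k hk).1 k' hk').trans (Finset.le_sup (f := id) hk')
      have hκK : ∀ r, K' ≤ κ r := by
        intro r
        induction r with
        | zero => exact le_rfl
        | succ r ihr =>
          rw [hκs]
          exact ihr.trans ((hbk _ (hK'.trans ihr)).trans (Nat.le_succ _))
      have hκK' : ∀ r, K ≤ κ r := fun r => le_trans hK' (hκK r)
      let u : ℕ → ℕ := fun r => u0 (κ r)
      let v : ℕ → ℕ := fun r => maxSupp (y' (b (κ r)))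
      have huv : ∀ r, u r ≤ v r := fun r =>
        (hu0m.monotone (hbk _ (hκK' r))).trans (minSupp_le_maxSupp _)
      have hvu : ∀ r, v r < u (r + 1) := fun r => hb' _ _ (by rw [hκs]; exact Nat.lt_succ_self _)
      have hum : StrictMono u := strictMono_nat_of_lt_succ fun r => (huv r).trans_lt (hvu r)
      have huv' : ∀ r r', r < r' → v r < u r' := by
        intro r r' hrr
        exact (hvu r).trans_le (hum.monotone hrr)
      have hsupp : ∀ r, ∀ i ∈ (T (cc (κ r))).support, u r ≤ i ∧ i ≤ v r := by
        intro r i hi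
        rw [hTsum] at hi
        obtain ⟨k, hk, hik⟩ := support_sum_subset _ _ _ hi
        have h1 := (hcc _ (hκK' r)).1 k hk
        have h2 : k ≤ b (κ r) := Finset.le_sup (f := id) hk
        refine ⟨(hu0m.monotone h1).trans (minSupp_le hik), (le_maxSupp hik).trans ?_⟩
        rcases h2.eq_or_lt with h | h
        · rw [h]
        · exact ((hb' _ _ h).trans_le (minSupp_le_maxSupp _)).le
      have hη' : 0 < η / C := div_pos hη hC0
      obtain ⟨G, e, -, he0, hes, hGS, hsmall⟩ := exists_scc huv hvu n (η / C) hη' 0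
      let X : c00 := ∑ r ∈ G, e r • T (cc (κ r))
      let cX : ℕ →₀ ℝ := ∑ r ∈ G, e r • cc (κ r)
      have hTX : T cX = X := by
        simp only [cX, X, map_sum, map_smul]
      have hX1 : ∀ g w, WIW P g w → |ev g X| ≤ 1 := by
        intro g w hg
        simp only [X]
        rw [ev_sum_smul]
        have := abs_sum_split_le (A := ∅) (t := fun r => ev g (T (cc (κ r)))) (a := 0) (b := 1)
          (ε := 0) he0 hes (by simp) (by simp) le_rfl zero_le_one (by simp)
          (fun r _ _ => (hcc _ (hκK' r)).2.2.2.2 g w hg)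
        simpa using this
      -- no functional can be large on `X`, otherwise a multiple of `X` has the required properties
      have hlt : ∀ g w, WIW P g w → ev g X < C⁻¹ := by
        intro f w hf
        by_contra hge
        push Not at hge
        refine hcon ⟨(ev f X)⁻¹ • X, f, w, ?_, ?_, ?_, hf, ?_, ?_⟩
        · rw [← hTX]
          exact Submodule.smul_mem _ _ (hTspan _)
        · intro i hi
          have hi' : i ∈ X.support := Finsupp.support_smul hi
          obtain ⟨r, -, hir⟩ := support_sum_subset _ _ _ hi'
          exact (hκK' r).trans ((hu0m.le_apply).trans (hsupp r i hir).1)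
        all_goals
          have hpos : 0 < ev f X := (inv_pos.mpr hC0).trans_le hge
          have hinv : (ev f X)⁻¹ ≤ C := by
            rw [inv_le_comm₀ hpos hC0]; exact hge
          have hinv0 : 0 < (ev f X)⁻¹ := inv_pos.mpr hpos
        · intro g w' hg
          rw [map_smul, smul_eq_mul, abs_mul, abs_of_pos hinv0]
          calc _ ≤ C * 1 := mul_le_mul hinv (hX1 g w' hg) (abs_nonneg _) hC0.le
            _ = C := mul_one _
        · rw [map_smul, smul_eq_mul, inv_mul_cancel₀ hpos.ne']
        · intro g w' hg hw'
          rw [map_smul, smul_eq_mul, abs_mul, abs_of_pos hinv0]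
          have := small_weight_le huv' hsupp
            (fun r g w hg => (hcc _ (hκK' r)).2.2.2.2 g w hg) he0 hes hsmall hg hw'
          calc _ ≤ C * (1 / w' + η / C) := mul_le_mul hinv this (abs_nonneg _) hC0.le
            _ = C / w' + η := by field_simp
      have hcXs : cX.support ⊆ G.biUnion fun r => (cc (κ r)).support := by
        intro k hk
        obtain ⟨r, hr, hkr⟩ := support_sum_subset G e (fun r => cc (κ r)) hk
        exact Finset.mem_biUnion.mpr ⟨r, hr, hkr⟩
      have hsC : (C • cX).support ⊆ G.biUnion fun r => (cc (κ r)).support :=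
        Finsupp.support_smul.trans hcXs
      refine ⟨C • cX, ?_, ?_, ?_, ?_, ?_⟩
      · intro k hk
        obtain ⟨r, -, hkr⟩ := Finset.mem_biUnion.mp (hsC hk)
        exact (hκK r).trans ((hcc _ (hκK' r)).1 k hkr)
      · intro k
        rw [Finsupp.smul_apply, smul_eq_mul]
        refine mul_nonneg hC0.le ?_
        simp only [cX, Finsupp.finsetSum_apply, Finsupp.smul_apply, smul_eq_mul]
        exact Finset.sum_nonneg fun r _ => mul_nonneg (he0 r) ((hcc _ (hκK' r)).2.1 k)
      · rw [map_smul, smul_eq_mul, pow_succ']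
        refine mul_le_mul_of_nonneg_left ?_ hC0.le
        simp only [cX, map_sum, map_smul, smul_eq_mul]
        calc C ^ p = ∑ r ∈ G, e r * C ^ p := by rw [← Finset.sum_mul, hes, one_mul]
          _ ≤ _ := Finset.sum_le_sum fun r _ =>
            mul_le_mul_of_nonneg_left (hcc _ (hκK' r)).2.2.1 (he0 r)
      · have h1 := schreier_comp (hum.strictMonoOn _) hGS
          (G := fun r => (cc (κ r)).support.image u0) (fun r _ => (hcc _ (hκK' r)).2.2.2.1) ?_ ?_
        · rw [show n * (p + 1) = n + n * p by ring]
          refine schreier_spread (by omega) h1 id (fun _ _ _ _ h => h) ?_ (fun _ _ => le_rfl)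
          intro i hi
          obtain ⟨k, hk, rfl⟩ := Finset.mem_image.mp hi
          obtain ⟨r, hr, hkr⟩ := Finset.mem_biUnion.mp (hsC hk)
          exact Finset.mem_biUnion.mpr ⟨r, hr, Finset.mem_image_of_mem _ hkr⟩
        · intro r _ i hi
          obtain ⟨k, hk, rfl⟩ := Finset.mem_image.mp hi
          exact hu0m.monotone ((hcc _ (hκK' r)).1 k hk)
        · intro r _ r' _ hrr i hi i' hi'
          obtain ⟨k, hk, rfl⟩ := Finset.mem_image.mp hi
          obtain ⟨k', hk', rfl⟩ := Finset.mem_image.mp hi'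
          have h2 : k ≤ b (κ r) := Finset.le_sup (f := id) hk
          have h3 := (hcc _ (hκK' r')).1 k' hk'
          have h4 : u0 (b (κ r)) < u0 (κ r') :=
            (minSupp_le_maxSupp _).trans_lt (huv' r r' hrr)
          exact (hu0m.monotone h2).trans_lt (h4.trans_le (hu0m.monotone h3))
      · intro g w hg
        rw [map_smul, hTX, map_smul, smul_eq_mul, abs_mul, abs_of_pos hC0]
        have h1 := hlt g w hg
        have h2 := hlt _ w (WIW_neg hg)
        rw [map_neg, LinearMap.neg_apply] at h2
        have h3 : |ev g X| ≤ C⁻¹ := abs_le.mpr ⟨by linarith, h1.le⟩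
        calc _ ≤ C * C⁻¹ := mul_le_mul_of_nonneg_left h3 hC0.le
          _ = 1 := mul_inv_cancel₀ hC0.ne'
  -- the iteration contradicts the lower `ℓ₁` estimate for large `j`
  set C0 : ℝ := C ^ ((n : ℝ)⁻¹) with hC0def
  have hC01 : 1 < C0 := Real.one_lt_rpow hC (by positivity)
  have hC0n : C0 ^ n = C := Real.rpow_inv_natCast_pow hC0.le (by omega)
  have hbound : ∀ j, C0 ^ (P.n j) / (P.m j : ℝ) ≤ 4 * C := by
    intro j
    have hmj : (0 : ℝ) < P.m j := by exact_mod_cast (zero_lt_two.trans_le (two_le_m P j))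
    obtain ⟨c, -, hc0, hcS, hcSch, hcn⟩ := main (P.n j / n) K le_rfl
    obtain ⟨g, w, hg, hgv⟩ := hlow j c.support c hc0
      (schreier_mono (Nat.mul_div_le _ _) hcSch (by
        intro i hi
        obtain ⟨k, -, rfl⟩ := Finset.mem_image.mp hi
        exact hu01 k))
    have h1 : ev g (∑ k ∈ c.support, c k • y (φ k + 1)) ≤ 1 := (le_abs_self _).trans (hcn g w hg)
    rw [← hSsum] at hgv
    have h2 : (1 / 4) / (P.m j : ℝ) * C ^ (P.n j / n) ≤ 1 :=
      (mul_le_mul_of_nonneg_left hcS (by positivity)).trans (hgv.trans h1)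
    have h3 : C ^ (P.n j / n) ≤ 4 * P.m j := by
      have h4 : (1 / 4) / (P.m j : ℝ) * C ^ (P.n j / n) = C ^ (P.n j / n) / (4 * P.m j) := by
        field_simp
      rw [h4, div_le_one (by positivity)] at h2
      exact h2
    have h5 : C0 ^ (P.n j) ≤ C ^ (P.n j / n) * C := by
      calc C0 ^ (P.n j) ≤ C0 ^ (n * (P.n j / n) + n) := by
            refine pow_le_pow_right₀ hC01.le ?_
            have := Nat.div_add_mod (P.n j) n
            have := Nat.mod_lt (P.n j) (show n > 0 by omega)
            omega
        _ = C ^ (P.n j / n) * C := by rw [pow_add, pow_mul, hC0n]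
    rw [div_le_iff₀ hmj]
    nlinarith
  obtain ⟨j, hj⟩ := ((P.growth_exp C0 hC01).eventually_gt_atTop (4 * C)).exists
  exact absurd (hbound j) (not_le.mpr hj)

/-! ### Rapidly increasing sequences -/

/-- The reciprocal of a weight; it is `0` for the weight `∞` of unit functionals. -/
noncomputable def winv (w : ℕ∞) : ℝ := ((w.toNat : ℕ) : ℝ)⁻¹

lemma winv_nonneg (w : ℕ∞) : 0 ≤ winv w := by unfold winv; positivity

lemma winv_coe (w : ℕ) : winv (w : ℕ∞) = (w : ℝ)⁻¹ := by simp [winv]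

lemma winv_le {L : ℕ} (hL : 0 < L) {w : ℕ∞} (h : (L : ℕ∞) ≤ w) : winv w ≤ (L : ℝ)⁻¹ := by
  induction w using ENat.recTopCoe with
  | top => simp [winv]
  | coe w =>
    rw [winv_coe]
    have h' : L ≤ w := by exact_mod_cast h
    have : (L : ℝ) ≤ w := by exact_mod_cast h'
    exact inv_anti₀ (by exact_mod_cast hL) this

/-- A rapidly increasing block sequence `z` of vectors bounded by `C`, together with functionals
`f k` supported in `z k`, of very fast growing weights `W k` and with `f k (z k) = 1`.  The last
field says that a functional of weight `w` exceeds `C / w + 1 / (k + 1)` on at most one `z k`. -/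
structure FastSeq (P : IWParams) (C : ℝ) (z f : ℕ → c00) (W : ℕ → ℕ∞) : Prop where
  ne : ∀ k, (z k).support.Nonempty
  blk : ∀ k, Blocks (z k) (z (k + 1))
  le : ∀ k, k ≤ minSupp (z k)
  bd : ∀ k g w, WIW P g w → |ev g (z k)| ≤ C
  mem : ∀ k, WIW P (f k) (W k)
  sub : ∀ k, (f k).support ⊆ (z k).support
  val : ∀ k, ev (f k) (z k) = 1
  fast : ∀ k k', k < k' → (maxSupp (z k) : ℕ∞) < W k'
  exc : ∀ g w, WIW P g w → ∀ k l, C * winv w + 1 / (k + 1) < |ev g (z k)| →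
    C * winv w + 1 / (l + 1) < |ev g (z l)| → k = l

/-- In `exists_good` the norming functional can be supported inside `z`; its weight then exceeds
`N`, since functionals of weight at most `N` have values below one. -/
lemma exists_good' {y : ℕ → c00} (hne : ∀ k, (y k).support.Nonempty)
    (hb : ∀ k, Blocks (y k) (y (k + 1))) (hn : ∀ k, iwNorm P (y k) = 1) {C : ℝ} (hC : 1 < C)
    (hC' : C ≤ 3 / 2) (N K k : ℕ) :
    ∃ z f w, z ∈ Submodule.span ℝ (Set.range y) ∧ (∀ i ∈ z.support, K ≤ i) ∧
      (∀ g w, WIW P g w → |ev g z| ≤ C) ∧ WIW P f w ∧ f.support ⊆ z.support ∧ ev f z = 1 ∧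
      (N : ℕ∞) < w ∧
      ∀ (g : c00) (w : ℕ), WIW P g w → w ≤ N → |ev g z| ≤ C / w + 1 / (k + 1) := by
  obtain ⟨z, f, w, hz, hK, hbd, hf, hfz, hsm⟩ := exists_good hne hb hn hC N K
    (η := min (1 / 5) (1 / ((k : ℝ) + 1))) (lt_min (by norm_num) (by positivity))
  obtain ⟨f', hf', hs, he⟩ := WIW_restrict hf (x := z) (by rw [hfz]; exact one_ne_zero)
  refine ⟨z, f', w, hz, hK, hbd, hf', hs, he.trans hfz, ?_, ?_⟩
  · by_contra hw
    push Not at hw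
    have hw' := hw
    obtain ⟨v, rfl⟩ := ENat.ne_top_iff_exists.mp (ne_top_of_le_ne_top (ENat.natCast_ne_top N) hw)
    have h1 := hsm f' v hf' (by exact_mod_cast hw)
    rw [he, hfz, abs_one] at h1
    have h2 : (2 : ℝ) ≤ v := by
      generalize hv' : (v : ℕ∞) = v' at hf'
      cases hf' with
      | unit i s hs => simp at hv'
      | op l hl js d f wt hf hadm hv =>
        have : v = ∏ i, P.m (js i) := by exact_mod_cast hv'
        rw [this]
        exact_mod_cast two_le_prod P hl js
    have h3 : C / v ≤ 3 / 2 / 2 := div_le_div₀ (by norm_num) hC' (by norm_num) h2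
    have h4 := min_le_left (1 / 5) (1 / ((k : ℝ) + 1))
    linarith
  · intro g w hg hw
    exact (hsm g w hg hw).trans (add_le_add_right (min_le_right _ _) _)

/-- Iterating `exists_good'`, with parameters `N_k` increasing rapidly: for all but one `k`, either
`w ≤ N_k` and the estimate for small weights applies to `z k`, or `w ≥ N_{k+1}` is large compared
with the `ℓ₁`-norm of `z k`. -/
lemma exists_fastSeq {y : ℕ → c00} (hne : ∀ k, (y k).support.Nonempty)
    (hb : ∀ k, Blocks (y k) (y (k + 1))) (hn : ∀ k, iwNorm P (y k) = 1) {C : ℝ} (hC : 1 < C)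
    (hC' : C ≤ 3 / 2) :
    ∃ z f W, FastSeq P C z f W ∧ ∀ k, z k ∈ Submodule.span ℝ (Set.range y) := by
  choose Z Ff Ww hZ1 hZ2 hZ3 hZ4 hZ5 hZ6 hZ7 hZ8 using
    fun N K k => exists_good' (P := P) hne hb hn hC hC' N K k
  let st : ℕ → ℕ × ℕ := fun k => Nat.rec (0, 0) (fun k p =>
    (max p.1 (max ⌈((k : ℝ) + 1) * l1 (Z p.1 p.2 k)⌉₊ (maxSupp (Z p.1 p.2 k))),
      max (k + 1) (maxSupp (Z p.1 p.2 k) + 1))) k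
  let z : ℕ → c00 := fun k => Z (st k).1 (st k).2 k
  let f : ℕ → c00 := fun k => Ff (st k).1 (st k).2 k
  let W : ℕ → ℕ∞ := fun k => Ww (st k).1 (st k).2 k
  have hst1 : ∀ k, (st (k + 1)).1 =
    max (st k).1 (max ⌈((k : ℝ) + 1) * l1 (z k)⌉₊ (maxSupp (z k))) := fun k => rfl
  have hst2 : ∀ k, (st (k + 1)).2 = max (k + 1) (maxSupp (z k) + 1) := fun k => rfl
  have hmono : Monotone fun k => (st k).1 := monotone_nat_of_le_succ fun k => by
    rw [hst1]; exact le_max_left _ _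
  have hK : ∀ k, k ≤ (st k).2 := by
    intro k
    cases k with
    | zero => exact Nat.zero_le _
    | succ k => rw [hst2]; exact le_max_left _ _
  have hne' : ∀ k, (z k).support.Nonempty := by
    intro k
    obtain ⟨i, -, hi⟩ := ev_ne_zero (f := f k) (x := z k) (by
      rw [show ev (f k) (z k) = 1 from hZ6 _ _ _]; exact one_ne_zero)
    exact ⟨i, hi⟩
  have hmin : ∀ k, (st k).2 ≤ minSupp (z k) := fun k => hZ2 _ _ _ _ (minSupp_mem (hne' k))
  have hblk : ∀ k, Blocks (z k) (z (k + 1)) := by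
    intro k
    refine lt_of_lt_of_le ?_ (hmin (k + 1))
    rw [hst2]
    exact lt_of_lt_of_le (Nat.lt_succ_self _) (le_max_right _ _)
  refine ⟨z, f, W, ⟨hne', hblk, fun k => (hK k).trans (hmin k), fun k => hZ3 _ _ _,
    fun k => hZ4 _ _ _, fun k => hZ5 _ _ _, fun k => hZ6 _ _ _, ?_, ?_⟩, fun k => hZ1 _ _ _⟩
  · intro k k' hkk
    refine lt_of_le_of_lt ?_ (hZ7 _ _ k')
    have h1 : maxSupp (z k) ≤ (st (k + 1)).1 := by
      rw [hst1]; exact (le_max_right _ _).trans (le_max_right _ _)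
    exact_mod_cast h1.trans (hmono hkk)
  · intro g w hg
    induction w using ENat.recTopCoe with
    | top =>
      intro k k' h1 h2
      generalize hw' : (⊤ : ℕ∞) = w' at hg
      cases hg with
      | op l hl js d f wt hf hadm hv =>
        exact absurd hw'.symm (ENat.natCast_ne_top _)
      | unit i s hs =>
        have hpos : ∀ k : ℕ, (0 : ℝ) ≤ C * winv ⊤ + 1 / (k + 1) := fun k =>
          add_nonneg (mul_nonneg (by linarith) (winv_nonneg _)) (by positivity)
        have hmem : ∀ k, C * winv ⊤ + 1 / (k + 1) < |ev (Finsupp.single i s) (z k)| →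
            i ∈ (z k).support := by
          intro k hk
          obtain ⟨i', hi', hi''⟩ := ev_ne_zero (abs_pos.mp ((hpos k).trans_lt hk))
          rwa [Finset.mem_singleton.mp (Finsupp.support_single_subset hi')] at hi''
        have hi1 := hmem k h1
        have hi2 := hmem k' h2
        by_contra hkk
        rcases lt_or_gt_of_ne hkk with h | h
        · exact lt_irrefl _ (blocks_lt (blocks_of_lt hblk h) hi1 hi2)
        · exact lt_irrefl _ (blocks_lt (blocks_of_lt hblk h) hi2 hi1)
    | coe w =>
      -- an exceptional index `k` satisfies `(st k).1 < w < (st (k + 1)).1`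
      have hlow : ∀ k, C * winv (w : ℕ∞) + 1 / (k + 1) < |ev g (z k)| → (st k).1 < w := by
        intro k hk
        by_contra h
        have : |ev g (z k)| ≤ C / w + 1 / (k + 1) := hZ8 _ _ k g w hg (not_lt.mp h)
        rw [winv_coe, ← div_eq_mul_inv] at hk
        linarith
      have hup : ∀ k, C * winv (w : ℕ∞) + 1 / (k + 1) < |ev g (z k)| → w < (st (k + 1)).1 := by
        intro k hk
        by_contra h
        have h1 : ((k : ℝ) + 1) * l1 (z k) ≤ w := by
          refine (Nat.le_ceil _).trans ?_
          have : ⌈((k : ℝ) + 1) * l1 (z k)⌉₊ ≤ (st (k + 1)).1 := by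
            rw [hst1]; exact (le_max_left _ _).trans (le_max_right _ _)
          exact_mod_cast this.trans (not_lt.mp h)
        have hw0 : (0 : ℝ) < w := by exact_mod_cast (Nat.zero_le _).trans_lt (hlow k hk)
        have h2 := abs_ev_le_l1_div hg (z k)
        have h3 : l1 (z k) / w ≤ 1 / ((k : ℝ) + 1) := by
          rw [div_le_div_iff₀ hw0 (by positivity)]
          linarith
        have h4 : 0 ≤ C * winv (w : ℕ∞) := mul_nonneg (by linarith) (winv_nonneg _)
        linarith
      intro k l h1 h2
      by_contra hkl
      rcases lt_or_gt_of_ne hkl with h | h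
      · exact absurd (hmono h) (not_le.mpr ((hlow l h2).trans (hup k h1)))
      · exact absurd (hmono h) (not_le.mpr ((hlow k h1).trans (hup l h2)))

/-! ### The building blocks of the array -/

/-- The vector `m_j ∑_{k ∈ F} c_k z_k`. -/
noncomputable def vec (P : IWParams) (z : ℕ → c00) (j : ℕ) (F : Finset ℕ) (c : ℕ → ℝ) : c00 :=
  (P.m j : ℝ) • ∑ k ∈ F, c k • z k

lemma ev_vec (g : c00) (z : ℕ → c00) (j : ℕ) (F : Finset ℕ) (c : ℕ → ℝ) :
    ev g (vec P z j F c) = P.m j * ∑ k ∈ F, c k * ev g (z k) := by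
  rw [vec, map_smul, smul_eq_mul, ev_sum_smul]

/-- `vec P z j F c` comes from a special convex combination of order `n_j - 1`, and satisfies two
upper estimates with error `τ`: for functionals of an arbitrary weight (`upper`), and, for
functionals of weight less than `m_j`, for the part consisting of pieces of weight at least `L`
following the first relevant piece `q₀` (`tail`). -/
structure IsVec (P : IWParams) (C : ℝ) (z : ℕ → c00) (j : ℕ) (τ : ℝ) (L : ℕ) (F : Finset ℕ)
    (c : ℕ → ℝ) : Prop where
  nonneg : ∀ k, 0 ≤ c k
  sum : ∑ k ∈ F, c k = 1
  sch : F.image (fun k => minSupp (z k)) ∈ Schreier (P.n j - 1)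
  upper : ∀ g w, WIW P g w → |ev g (vec P z j F c)| ≤ P.m j * C * winv w + τ
  tail : ∀ (l : ℕ) (_ : 0 < l) (js : Fin l → ℕ) (d : ℕ) (f : Fin d → c00) (w : Fin d → ℕ∞),
    (∀ q, WIW P (f q) (w q)) → Admissible (Schreier (∑ i, P.n (js i))) f →
    (∀ q r : Fin d, (q : ℕ) + 1 = (r : ℕ) → (maxSupp (f q) : ℕ∞) < w r) →
    (∏ i, P.m (js i)) < P.m j → ∀ q0 : Fin d, (∀ q < q0, ∀ k ∈ F, ev (f q) (z k) = 0) →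
    (∀ q, q0 < q → (L : ℕ∞) ≤ w q) →
    |((∏ i, P.m (js i) : ℕ) : ℝ)⁻¹ *
      ∑ q ∈ Finset.univ.filter (q0 < ·), ev (f q) (vec P z j F c)| ≤ τ

/-- The threshold `L` does not depend on how far out the combination is taken. -/
lemma exists_isVec {C : ℝ} (hC : 1 < C) {z f : ℕ → c00} {W : ℕ → ℕ∞} (S : FastSeq P C z f W)
    (j : ℕ) {τ : ℝ} (hτ : 0 < τ) :
    ∃ L : ℕ, ∀ K : ℕ, ∃ F c, (∀ k ∈ F, K ≤ k) ∧ IsVec P C z (j + 1) τ L F c := by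
  classical
  have hC0 : 0 < C := by linarith
  have hm : (0 : ℝ) < P.m (j + 1) := by
    exact_mod_cast (zero_lt_two.trans_le (two_le_m P (j + 1)))
  set m : ℝ := ((P.m (j + 1) : ℕ) : ℝ) with hmdef
  obtain ⟨L, hL⟩ := exists_nat_gt (4 * C * m / τ)
  obtain ⟨K0, hK0⟩ := exists_nat_gt (4 * m / τ)
  have hL0 : 0 < L := by
    have : (0 : ℝ) < L := (by positivity : (0 : ℝ) ≤ 4 * C * m / τ).trans_lt hL
    exact_mod_cast this
  have hLR : (0 : ℝ) < L := by exact_mod_cast hL0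
  have hn2 : 1 < P.n (j + 1) := by
    have := P.n_mono (Nat.succ_pos j)
    rw [P.n_first] at this
    exact this
  have huv : ∀ k, minSupp (z k) ≤ maxSupp (z k) := fun k => minSupp_le_maxSupp _
  have hmC : m * (C / L) ≤ τ / 4 := by
    rw [div_lt_iff₀ hτ] at hL
    rw [← mul_div_assoc, div_le_iff₀ hLR]
    nlinarith
  refine ⟨L, fun K => ?_⟩
  have hε : 0 < τ / (8 * C * m) := by positivity
  obtain ⟨F, c, hFK, hc0, hcs, hcS, hsmall⟩ :=
    exists_scc huv S.blk (P.n (j + 1) - 1) (τ / (8 * C * m)) hε (max K K0)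
  have hmK : ∀ k ∈ F, 1 / ((k : ℝ) + 1) ≤ τ / (4 * m) := by
    intro k hk
    have h1 : K0 ≤ k := (le_max_right _ _).trans (hFK k hk)
    have h2 : (K0 : ℝ) ≤ k := by exact_mod_cast h1
    rw [div_lt_iff₀ hτ] at hK0
    rw [div_le_div_iff₀ (by positivity) (by positivity)]
    nlinarith
  refine ⟨F, c, fun k hk => (le_max_left _ _).trans (hFK k hk), hc0, hcs, hcS, ?_, ?_⟩
  · intro g w hg
    rw [ev_vec, abs_mul, abs_of_pos hm]
    let A := F.filter fun k : ℕ => C * winv w + 1 / ((k : ℝ) + 1) < |ev g (z k)|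
    have hA : ∑ k ∈ A, c k ≤ τ / (8 * C * m) := by
      refine hsmall 0 (by omega) A (Finset.filter_subset _ _) ?_
      refine Finset.card_le_one.mpr fun k hk k' hk' => ?_
      exact S.exc g w hg k k' (Finset.mem_filter.mp hk).2 (Finset.mem_filter.mp hk').2
    have hwn := winv_nonneg w
    have h1 := abs_sum_split_le (t := fun k => ev g (z k)) (a := C)
      (b := C * winv w + τ / (4 * m)) hc0 hcs (Finset.filter_subset _ _) hA hC0.le (by positivity)
      (fun k _ => S.bd k g w hg) ?_
    · calc m * |∑ k ∈ F, c k * ev g (z k)|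
          ≤ m * (τ / (8 * C * m) * C + (C * winv w + τ / (4 * m))) :=
            mul_le_mul_of_nonneg_left h1 hm.le
        _ = m * C * winv w + (τ / 8 + τ / 4) := by field_simp; ring
        _ ≤ m * C * winv w + τ := by linarith
    · intro k hk hkA
      have : |ev g (z k)| ≤ C * winv w + 1 / ((k : ℝ) + 1) := by
        by_contra h
        exact hkA (Finset.mem_filter.mpr ⟨hk, not_le.mp h⟩)
      linarith [hmK k hk]
  · intro l hl js d h w hW hadm hv hlt q0 hzero hLw
    set w0 := ∏ i, P.m (js i) with hw0def
    have hw2 : (2 : ℝ) ≤ w0 := by exact_mod_cast two_le_prod P hl js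
    have hw0 : (0 : ℝ) < w0 := by linarith
    have hwi : (w0 : ℝ)⁻¹ ≤ 1 := inv_le_one_of_one_le₀ (by linarith)
    have hwi0 : 0 ≤ (w0 : ℝ)⁻¹ := inv_nonneg.mpr hw0.le
    have hnf : (∑ i, P.n (js i)) < P.n (j + 1) - 1 := by
      have : (∑ i, P.n (js i)) + 1 < P.n (j + 1) := by
        refine P.growth_sum l js j (fun i => ?_) ?_
        · have : P.m (js i) < P.m (j + 1) := (m_le_prod P js i).trans_lt hlt
          exact Nat.lt_succ_iff.mp (P.m_mono.lt_iff_lt.mp this)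
        · exact hlt.trans_le (Nat.le_self_pow two_ne_zero _)
      omega
    have hblk : ∀ k k', k < k' → maxSupp (z k) < minSupp (z k') := fun k k' hkk =>
      blocks_of_lt S.blk hkk
    let A := hitSet h (fun k => minSupp (z k)) (fun k => maxSupp (z k)) F
    have hAF : A ⊆ F := hitSet_subset _ _ _ _
    have hA := hsmall _ hnf A hAF (hitSet_TT hadm hblk F)
    let Ex : ℕ → Fin d → Prop := fun k q =>
      q0 < q ∧ C * winv (w q) + 1 / ((k : ℝ) + 1) < |ev (h q) (z k)|
    let B := F.filter fun k : ℕ => ∃ q, Ex k q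
    have hBF : B ⊆ F := Finset.filter_subset _ _
    have hB : ∑ k ∈ B, c k ≤ τ / (8 * C * m) := by
      refine hsmall _ hnf B hBF ?_
      let φ : ℕ → Fin d := fun k => if hk : ∃ q, Ex k q then hk.choose else q0
      have hφ : ∀ k ∈ B, Ex k (φ k) := by
        intro k hk
        have hk' : ∃ q, Ex k q := (Finset.mem_filter.mp hk).2
        simp only [φ, dif_pos hk']
        exact hk'.choose_spec
      refine TT_of_admissible hadm φ ?_ ?_
      · intro k hk k' hk' hkk
        have h1 := (hφ k hk).2
        have h2 := (hφ k' hk').2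
        rw [← hkk] at h2
        exact S.exc _ _ (hW _) k k' h1 h2
      · intro k hk
        have h1 := (hφ k hk).2
        have h2 : (0 : ℝ) ≤ C * winv (w (φ k)) + 1 / ((k : ℝ) + 1) :=
          add_nonneg (mul_nonneg hC0.le (winv_nonneg _)) (by positivity)
        obtain ⟨i, hi, hi'⟩ := ev_ne_zero (abs_pos.mp (h2.trans_lt h1))
        exact (minSupp_le hi).trans (le_maxSupp hi')
    let t : ℕ → ℝ := fun k => (w0 : ℝ)⁻¹ * ∑ q ∈ Finset.univ.filter (q0 < ·), ev (h q) (z k)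
    have hrew : (w0 : ℝ)⁻¹ * ∑ q ∈ Finset.univ.filter (q0 < ·), ev (h q) (vec P z (j + 1) F c) =
        m * ∑ k ∈ F, c k * t k := by
      simp only [ev_vec, t]
      rw [← Finset.mul_sum, Finset.sum_comm]
      simp only [Finset.mul_sum]
      refine Finset.sum_congr rfl fun k _ => Finset.sum_congr rfl fun q _ => ?_
      ring
    have hg : WIW P ((w0 : ℝ)⁻¹ • ∑ q, h q) (w0 : ℕ∞) := WIW.op l hl js d h w hW hadm hv
    -- off `A`, a single piece acts on `z k`
    have hsingle : ∀ k ∈ F, k ∉ A → ∀ b : ℝ, 0 ≤ b → (∀ q, q0 < q → |ev (h q) (z k)| ≤ b) →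
        |t k| ≤ b := by
      intro k hk hkA b hb hqb
      simp only [t]
      rw [abs_mul, abs_of_nonneg hwi0, Finset.sum_filter]
      refine (mul_le_of_le_one_left (abs_nonneg _) hwi).trans ?_
      refine abs_sum_le_of_unique hb (fun q => ?_) (fun q r hq hr => ?_)
      · split_ifs with hq
        · exact hqb q hq
        · simpa using hb
      · split_ifs at hq hr
        · exact unique_of_not_hit (u := fun k => minSupp (z k)) (v := fun k => maxSupp (z k))
            hadm.2.1 hk hkA (fun i hi => ⟨minSupp_le hi, le_maxSupp hi⟩) hq hr
        all_goals simp_all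
    have hAB : ∑ k ∈ A ∪ B, c k ≤ τ / (4 * C * m) := by
      have h1 := Finset.sum_union_inter (s₁ := A) (s₂ := B) (f := c)
      have h2 : 0 ≤ ∑ k ∈ A ∩ B, c k := Finset.sum_nonneg fun k _ => hc0 k
      have h3 : τ / (4 * C * m) = τ / (8 * C * m) + τ / (8 * C * m) := by field_simp; norm_num
      linarith
    have h1 := abs_sum_split_le (t := t) (a := 2 * C) (b := C / L + τ / (4 * m)) hc0 hcs
      (Finset.union_subset hAF hBF) hAB (by positivity) (by positivity) ?_ ?_
    · rw [hrew, abs_mul, abs_of_pos hm]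
      calc m * |∑ k ∈ F, c k * t k|
          ≤ m * (τ / (4 * C * m) * (2 * C) + (C / L + τ / (4 * m))) :=
            mul_le_mul_of_nonneg_left h1 hm.le
        _ = τ / 2 + m * (C / L) + τ / 4 := by field_simp; ring
        _ ≤ τ := by linarith
    · intro k hk
      by_cases hkA : k ∈ A
      · have hkF := hAF hkA
        have hsum : ev (∑ q, h q) (z k) = ev (h q0) (z k) +
            ∑ q ∈ Finset.univ.filter (q0 < ·), ev (h q) (z k) := by
          rw [map_sum, LinearMap.sum_apply, Finset.sum_filter,
            ← Finset.add_sum_erase _ _ (Finset.mem_univ q0)]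
          congr 1
          rw [← Finset.add_sum_erase _ (fun q => if q0 < q then ev (h q) (z k) else 0)
            (Finset.mem_univ q0)]
          rw [if_neg (lt_irrefl _), zero_add]
          refine Finset.sum_congr rfl fun q hq => ?_
          split_ifs with hqq
          · rfl
          · exact hzero q (lt_of_le_of_ne (not_lt.mp hqq) (Finset.ne_of_mem_erase hq)) k hkF
        have ht : t k = ev ((w0 : ℝ)⁻¹ • ∑ q, h q) (z k) - (w0 : ℝ)⁻¹ * ev (h q0) (z k) := by
          rw [map_smul, LinearMap.smul_apply, smul_eq_mul, hsum]
          simp only [t]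
          ring
        rw [ht]
        have h2 := S.bd k _ _ hg
        have h3 := S.bd k _ _ (hW q0)
        have h4 : |(w0 : ℝ)⁻¹ * ev (h q0) (z k)| ≤ C := by
          rw [abs_mul, abs_of_nonneg hwi0]
          exact (mul_le_of_le_one_left (abs_nonneg _) hwi).trans h3
        refine (abs_sub _ _).trans ?_
        linarith
      · have hkB : k ∈ B := (Finset.mem_union.mp hk).resolve_left hkA
        refine (hsingle k (hBF hkB) hkA C hC0.le fun q _ => S.bd k _ _ (hW q)).trans ?_
        linarith
    · intro k hkF hk
      rw [Finset.mem_union, not_or] at hk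
      refine hsingle k hkF hk.1 _ (by positivity) fun q hq => ?_
      have h2 : |ev (h q) (z k)| ≤ C * winv (w q) + 1 / ((k : ℝ) + 1) := by
        by_contra hcon
        exact hk.2 (Finset.mem_filter.mpr ⟨hkF, q, hq, not_le.mp hcon⟩)
      have h3 := winv_le hL0 (hLw q hq)
      have h4 : C * winv (w q) ≤ C / L := by
        rw [div_eq_mul_inv]
        exact mul_le_mul_of_nonneg_left h3 hC0.le
      linarith [hmK k hkF]

/-! ### The upper estimate -/

/-- The upper estimate, by induction on the functional for all coefficients at once.  If `g` has
weight `w`, the rows with `m_{J i} ≤ w` are handled directly, with a geometric sum; on the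
remaining rows `g` acts, up to the errors `τ i`, like `1 / w` times a single one of its pieces, to
which the induction hypothesis applies. -/
lemma abs_ev_array_le {C δ θ B : ℝ} {z f : ℕ → c00} {W : ℕ → ℕ∞} (S : FastSeq P C z f W)
    (hC : 0 ≤ C) (hB : 0 ≤ B) {k l : ℕ} (J : Fin k → ℕ) (τ : Fin k → ℝ) (L : Fin k → ℕ)
    (F : Fin k → Fin l → Finset ℕ) (c : Fin k → Fin l → ℕ → ℝ)
    (hV : ∀ i jj, IsVec P C z (J i) (τ i) (L i) (F i jj) (c i jj))
    (hL : ∀ i i' jj, ∀ t ∈ F i jj, L i' ≤ t) (hτ0 : ∀ i, 0 ≤ τ i) (hτ : ∑ i, τ i ≤ δ)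
    (hgeo : ∀ w : ℕ, ∑ i ∈ Finset.univ.filter (fun i => P.m (J i) ≤ w), (P.m (J i) : ℝ)
      ≤ (1 + θ) * w)
    (hB1 : δ + B / 2 ≤ B) (hB2 : ∀ i, C * (1 + θ) + δ + B / P.m (J i) ≤ B)
    {g : c00} {w : ℕ∞} (hg : WIW P g w) :
    ∀ (a : Fin k → Fin l → ℝ) (M : ℝ), 0 ≤ M → (∀ i, ∑ jj, |a i jj| ≤ M) →
      |∑ i, ∑ jj, a i jj * ev g (vec P z (J i) (F i jj) (c i jj))| ≤ B * M := by
  classical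
  -- rowwise bounds sum up
  have key : ∀ (a r : Fin k → Fin l → ℝ) (ρ : Fin k → ℝ) (M : ℝ), (∀ i, 0 ≤ ρ i) →
      (∀ i jj, |r i jj| ≤ ρ i) → (∀ i, ∑ jj, |a i jj| ≤ M) →
      |∑ i, ∑ jj, a i jj * r i jj| ≤ (∑ i, ρ i) * M := by
    intro a r ρ M hρ hr ha
    rw [Finset.sum_mul]
    refine (Finset.abs_sum_le_sum_abs _ _).trans (Finset.sum_le_sum fun i _ => ?_)
    refine (Finset.abs_sum_le_sum_abs _ _).trans ?_
    calc ∑ jj, |a i jj * r i jj| ≤ ∑ jj, ρ i * |a i jj| := by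
          refine Finset.sum_le_sum fun jj _ => ?_
          rw [abs_mul, mul_comm]
          exact mul_le_mul_of_nonneg_right (hr i jj) (abs_nonneg _)
      _ = ρ i * ∑ jj, |a i jj| := by rw [Finset.mul_sum]
      _ ≤ ρ i * M := mul_le_mul_of_nonneg_left (ha i) (hρ i)
  have hδB : δ ≤ B := by linarith
  induction hg with
  | unit i s hs =>
    intro a M hM ha
    refine (key a _ τ M hτ0 (fun i jj => ?_) ha).trans
      (mul_le_mul_of_nonneg_right (hτ.trans hδB) hM)
    simpa [winv] using (hV i jj).upper _ _ (WIW.unit _ s hs)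
  | op p hp js d h w hW hadm hv ih =>
    intro a M hM ha
    have hg : WIW P _ _ := WIW.op p hp js d h w hW hadm hv
    set w0 := ∏ i, P.m (js i) with hw0def
    have hw2 : (2 : ℝ) ≤ w0 := by exact_mod_cast two_le_prod P hp js
    have hw0 : (0 : ℝ) < w0 := by linarith
    have hwi0 : 0 ≤ (w0 : ℝ)⁻¹ := inv_nonneg.mpr hw0.le
    set v : Fin k → Fin l → c00 := fun i jj => vec P z (J i) (F i jj) (c i jj) with hvdef
    have hev : ∀ x, ev ((w0 : ℝ)⁻¹ • ∑ q, h q) x = (w0 : ℝ)⁻¹ * ∑ q, ev (h q) x := by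
      intro x
      rw [map_smul, LinearMap.smul_apply, smul_eq_mul, map_sum, LinearMap.sum_apply]
    let Lm : ℕ := Finset.univ.sup L
    have hLm : ∀ i jj, ∀ t ∈ F i jj, Lm ≤ minSupp (z t) := fun i jj t ht =>
      (Finset.sup_le fun i' _ => hL i i' jj t ht).trans (S.le t)
    have hzero : ∀ q, maxSupp (h q) < Lm → ∀ i jj, ∀ t ∈ F i jj, ev (h q) (z t) = 0 := by
      intro q hq i jj t ht
      by_contra hne
      obtain ⟨n, hn, hn'⟩ := ev_ne_zero hne
      have := le_maxSupp hn
      have := minSupp_le hn'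
      have := hLm i jj t ht
      omega
    have hzero' : ∀ q, maxSupp (h q) < Lm → ∀ i jj, ev (h q) (v i jj) = 0 := by
      intro q hq i jj
      rw [hvdef]
      simp only
      rw [ev_vec, Finset.sum_eq_zero, mul_zero]
      intro t ht
      rw [hzero q hq i jj t ht, mul_zero]
    by_cases hex : ∃ q, Lm ≤ maxSupp (h q)
    swap
    · push Not at hex
      have : ∀ i jj, a i jj * ev ((w0 : ℝ)⁻¹ • ∑ q, h q) (v i jj) = 0 := by
        intro i jj
        rw [hev, Finset.sum_eq_zero (fun q _ => hzero' q (hex q) i jj), mul_zero, mul_zero]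
      rw [Finset.sum_eq_zero fun i _ => Finset.sum_eq_zero fun jj _ => this i jj, abs_zero]
      positivity
    -- the first piece reaching `Lm`
    have hne : (Finset.univ.filter fun q => Lm ≤ maxSupp (h q)).Nonempty := by
      obtain ⟨q, hq⟩ := hex
      exact ⟨q, by simpa using hq⟩
    set q0 := Finset.min' _ hne with hq0def
    have hq0 : Lm ≤ maxSupp (h q0) := (Finset.mem_filter.mp (Finset.min'_mem _ hne)).2
    have hlt : ∀ q < q0, maxSupp (h q) < Lm := by
      intro q hq
      by_contra hc
      exact absurd (Finset.min'_le _ q (by simpa using hc)) (not_le.mpr hq)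
    have hsplit : ∀ i jj, ev ((w0 : ℝ)⁻¹ • ∑ q, h q) (v i jj) = (w0 : ℝ)⁻¹ * ev (h q0) (v i jj) +
        (w0 : ℝ)⁻¹ * ∑ q ∈ Finset.univ.filter (q0 < ·), ev (h q) (v i jj) := by
      intro i jj
      rw [hev, ← mul_add]
      congr 1
      rw [Finset.sum_filter, ← Finset.add_sum_erase _ _ (Finset.mem_univ q0)]
      congr 1
      rw [← Finset.add_sum_erase _ (fun q => if q0 < q then ev (h q) (v i jj) else 0)
        (Finset.mem_univ q0), if_neg (lt_irrefl _), zero_add]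
      refine Finset.sum_congr rfl fun q hq => ?_
      split_ifs with hqq
      · rfl
      · exact hzero' q (hlt q (lt_of_le_of_ne (not_lt.mp hqq) (Finset.ne_of_mem_erase hq))) i jj
    let r : Fin k → Fin l → ℝ := fun i jj => ev ((w0 : ℝ)⁻¹ • ∑ q, h q) (v i jj) -
      if P.m (J i) ≤ w0 then 0 else (w0 : ℝ)⁻¹ * ev (h q0) (v i jj)
    let ρ : Fin k → ℝ := fun i => (if P.m (J i) ≤ w0 then P.m (J i) * (C * (w0 : ℝ)⁻¹) else 0) + τ i
    let a' : Fin k → Fin l → ℝ := fun i jj => if P.m (J i) ≤ w0 then 0 else a i jj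
    have hρ0 : ∀ i, 0 ≤ ρ i := by
      intro i
      have := hτ0 i
      simp only [ρ]
      split_ifs <;> positivity
    have hr : ∀ i jj, |r i jj| ≤ ρ i := by
      intro i jj
      simp only [r, ρ]
      split_ifs with hi
      · rw [sub_zero]
        have := (hV i jj).upper _ _ hg
        rw [winv_coe, mul_assoc] at this
        exact this
      · rw [hsplit, add_sub_cancel_left, zero_add]
        refine (hV i jj).tail p hp js d h w hW hadm hv (not_le.mp hi) q0
          (fun q hq t ht => hzero q (hlt q hq) i jj t ht) (fun q hq => ?_)
        have h1 : L i ≤ maxSupp (h q0) := (Finset.le_sup (Finset.mem_univ i)).trans hq0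
        have h2 : (L i : ℕ∞) ≤ maxSupp (h q0) := by exact_mod_cast h1
        exact h2.trans (vfg_all hadm.2.1 hv hq).le
    have hsum : ∑ i, ∑ jj, a i jj * ev ((w0 : ℝ)⁻¹ • ∑ q, h q) (v i jj) =
        ∑ i, ∑ jj, a i jj * r i jj + (w0 : ℝ)⁻¹ * ∑ i, ∑ jj, a' i jj * ev (h q0) (v i jj) := by
      simp only [Finset.mul_sum, ← Finset.sum_add_distrib]
      refine Finset.sum_congr rfl fun i _ => Finset.sum_congr rfl fun jj _ => ?_
      simp only [r, a']
      split_ifs <;> ring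
    have ha' : ∀ i, ∑ jj, |a' i jj| ≤ M := by
      intro i
      refine le_trans (Finset.sum_le_sum fun jj _ => ?_) (ha i)
      simp only [a']
      split_ifs
      · simp
      · exact le_rfl
    have h1 := key a r ρ M hρ0 hr ha
    have h2 := ih q0 a' M hM ha'
    have h3 : |∑ i, ∑ jj, a i jj * ev ((w0 : ℝ)⁻¹ • ∑ q, h q) (v i jj)| ≤
        ((∑ i, ρ i) + B * (w0 : ℝ)⁻¹) * M := by
      rw [hsum]
      refine (abs_add_le _ _).trans ?_
      rw [abs_mul, abs_of_nonneg hwi0, add_mul]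
      refine add_le_add h1 ?_
      calc (w0 : ℝ)⁻¹ * _ ≤ (w0 : ℝ)⁻¹ * (B * M) := mul_le_mul_of_nonneg_left h2 hwi0
        _ = B * (w0 : ℝ)⁻¹ * M := by ring
    refine h3.trans (mul_le_mul_of_nonneg_right ?_ hM)
    have hρs : ∑ i, ρ i ≤ (∑ i ∈ Finset.univ.filter (fun i => P.m (J i) ≤ w0), (P.m (J i) : ℝ)) *
        (C * (w0 : ℝ)⁻¹) + δ := by
      simp only [ρ]
      rw [Finset.sum_add_distrib, Finset.sum_mul, Finset.sum_filter]
      linarith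
    by_cases hI : ∃ i, P.m (J i) ≤ w0
    · obtain ⟨i, hi⟩ := hI
      have h4 : (∑ i ∈ Finset.univ.filter (fun i => P.m (J i) ≤ w0), (P.m (J i) : ℝ)) *
          (C * (w0 : ℝ)⁻¹) ≤ C * (1 + θ) := by
        calc _ ≤ (1 + θ) * w0 * (C * (w0 : ℝ)⁻¹) :=
              mul_le_mul_of_nonneg_right (hgeo w0) (by positivity)
          _ = C * (1 + θ) := by field_simp
      have h5 : B * (w0 : ℝ)⁻¹ ≤ B / P.m (J i) := by
        rw [div_eq_mul_inv]
        refine mul_le_mul_of_nonneg_left (inv_anti₀ ?_ (by exact_mod_cast hi)) hB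
        exact_mod_cast zero_lt_two.trans_le (two_le_m P (J i))
      linarith [hB2 i]
    · push Not at hI
      rw [Finset.filter_false_of_mem (fun i _ => not_le.mpr (hI i)), Finset.sum_empty, zero_mul,
        zero_add] at hρs
      have h5 : B * (w0 : ℝ)⁻¹ ≤ B / 2 := by
        rw [div_eq_mul_inv]
        exact mul_le_mul_of_nonneg_left (inv_anti₀ (by norm_num) hw2) hB
      linarith

/-! ### The lower estimate -/

/-- The functional norming a single row: up to the factor `1 / m_j` it is the sum of the
functionals `f t`, with signs, over all `t` occurring in the row. -/
lemma exists_lower {C : ℝ} {z f : ℕ → c00} {W : ℕ → ℕ∞} (S : FastSeq P C z f W) {j l : ℕ} {τ : ℝ}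
    {L : ℕ} (F : Fin l → Finset ℕ) (c : Fin l → ℕ → ℝ)
    (hV : ∀ jj, IsVec P C z j τ L (F jj) (c jj)) (hl : ∀ jj, ∀ t ∈ F jj, l ≤ t)
    (hF : ∀ jj jj', jj < jj' → ∀ t ∈ F jj, ∀ t' ∈ F jj', t < t') (a : Fin l → ℝ) :
    ∃ g w, WIW P g w ∧ (∀ jj, a jj * ev g (vec P z j (F jj) (c jj)) = |a jj|) ∧
      ∀ t, (∀ jj, t ∉ F jj) → ev g (z t) = 0 := by
  classical
  have hm : (0 : ℝ) < P.m j := by exact_mod_cast zero_lt_two.trans_le (two_le_m P j)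
  let U : Finset ℕ := Finset.univ.biUnion F
  have hU : ∀ {t}, t ∈ U ↔ ∃ jj, t ∈ F jj := by simp [U]
  let N : ℕ → Prop := fun t => ∃ jj, t ∈ F jj ∧ a jj < 0
  let h : ℕ → c00 := fun t => if N t then -f t else f t
  have hdis : ∀ t t', t ≠ t' → ev (f t) (z t') = 0 := by
    intro t t' htt
    refine ev_eq_zero fun i hi hi' => ?_
    have hi := S.sub t hi
    rcases lt_or_gt_of_ne htt with hlt | hlt
    · exact absurd (blocks_lt (blocks_of_lt S.blk hlt) hi hi') (lt_irrefl _)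
    · exact absurd (blocks_lt (blocks_of_lt S.blk hlt) hi' hi) (lt_irrefl _)
  have hfne : ∀ t, (f t).support.Nonempty := by
    intro t
    obtain ⟨i, hi, -⟩ := ev_ne_zero (f := f t) (x := z t) (by rw [S.val]; exact one_ne_zero)
    exact ⟨i, hi⟩
  have hmin : ∀ t, minSupp (h t) = minSupp (f t) := by
    intro t; simp only [h]; split_ifs <;> simp [minSupp_neg]
  have hmax : ∀ t, maxSupp (h t) = maxSupp (f t) := by
    intro t; simp only [h]; split_ifs <;> simp [maxSupp_neg]
  have hzf : ∀ t, minSupp (z t) ≤ minSupp (f t) := fun t =>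
    minSupp_le (S.sub t (minSupp_mem (hfne t)))
  have hfz : ∀ t, maxSupp (f t) ≤ maxSupp (z t) := fun t => maxSupp_mono (S.sub t)
  have hblk : ∀ t t', t < t' → Blocks (f t) (f t') := fun t t' htt =>
    (hfz t).trans_lt ((blocks_of_lt S.blk htt).trans_le (hzf t'))
  have hn1 : 1 ≤ P.n j := one_le_n P j
  have hadm : U.image (fun t => minSupp (z t)) ∈ Schreier (P.n j) := by
    obtain ⟨n, hn⟩ : ∃ n, P.n j = n + 1 := ⟨P.n j - 1, by omega⟩
    rw [hn]
    refine ⟨l, fun jj => (F jj).image fun t => minSupp (z t), fun jj => ?_, ?_, ?_, ?_⟩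
    · have := (hV jj).sch
      rwa [hn, Nat.add_sub_cancel] at this
    · intro jj jj' hjj i hi i' hi'
      obtain ⟨t, ht, rfl⟩ := Finset.mem_image.mp hi
      obtain ⟨t', ht', rfl⟩ := Finset.mem_image.mp hi'
      exact blocks_minSupp_lt (blocks_of_lt S.blk (hF jj jj' hjj t ht t' ht'))
    · intro i hi
      obtain ⟨t, ht, rfl⟩ := Finset.mem_image.mp hi
      obtain ⟨jj, hjj⟩ := hU.mp ht
      exact (hl jj t hjj).trans (S.le t)
    · simp only [U]
      rw [Finset.biUnion_image]
  have hW : WIW P (((∏ _i : Fin 1, P.m j : ℕ) : ℝ)⁻¹ • ∑ t ∈ U, h t)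
      ((∏ _i : Fin 1, P.m j : ℕ) : ℕ∞) := by
    refine op_finset U zero_lt_one (fun _ => j) h W ?_ ?_ ?_ ?_ ?_
    · intro t _
      simp only [h]
      split_ifs
      · exact WIW_neg (S.mem t)
      · exact S.mem t
    · intro t _
      simp only [h]
      split_ifs
      · simpa using hfne t
      · exact hfne t
    · intro t _ t' _ htt
      unfold Blocks
      rw [hmin, hmax]
      exact hblk t t' htt
    · intro t _ t' _ htt
      rw [hmax]
      refine lt_of_le_of_lt ?_ (S.fast t t' htt)
      exact_mod_cast hfz t
    · simp only [hmin, Finset.univ_unique, Finset.sum_singleton]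
      refine schreier_image_spread hn1 subset_rfl ?_ ?_ (fun t _ => hzf t) hadm
      · intro t _ t' _ htt
        exact blocks_minSupp_lt (blocks_of_lt S.blk htt)
      · intro t _ t' _ htt
        exact blocks_minSupp_lt (hblk t t' htt)
  simp only [Finset.univ_unique, Finset.prod_singleton] at hW
  have hev : ∀ t, ev ((P.m j : ℝ)⁻¹ • ∑ t ∈ U, h t) (z t) =
      (P.m j : ℝ)⁻¹ * ∑ t' ∈ U, ev (h t') (z t) := by
    intro t
    rw [map_smul, LinearMap.smul_apply, smul_eq_mul, map_sum, LinearMap.sum_apply]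
  have hhdis : ∀ t t', t ≠ t' → ev (h t) (z t') = 0 := by
    intro t t' htt
    simp only [h]
    split_ifs
    · rw [map_neg, LinearMap.neg_apply, hdis t t' htt, neg_zero]
    · exact hdis t t' htt
  refine ⟨_, _, hW, ?_, ?_⟩
  · intro jj
    have hval : ∀ t ∈ F jj, ev ((P.m j : ℝ)⁻¹ • ∑ t ∈ U, h t) (z t) =
        (P.m j : ℝ)⁻¹ * if a jj < 0 then -1 else 1 := by
      intro t ht
      have htU : t ∈ U := hU.mpr ⟨jj, ht⟩
      have hN : N t ↔ a jj < 0 := by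
        refine ⟨?_, fun hn => ⟨jj, ht, hn⟩⟩
        rintro ⟨jj', ht', hn⟩
        rcases lt_trichotomy jj jj' with hlt | heq | hlt
        · exact absurd (hF _ _ hlt t ht t ht') (lt_irrefl _)
        · rwa [heq]
        · exact absurd (hF _ _ hlt t ht' t ht) (lt_irrefl _)
      rw [hev, Finset.sum_eq_single_of_mem t htU (fun t' _ htt => hhdis t' t htt)]
      simp only [h, hN]
      split_ifs
      · rw [map_neg, LinearMap.neg_apply, S.val]
      · rw [S.val]
    rw [ev_vec, Finset.sum_congr rfl (fun t ht => by rw [hval t ht]), ← Finset.sum_mul,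
      (hV jj).sum, one_mul, mul_inv_cancel_left₀ hm.ne']
    split_ifs with hn
    · rw [abs_of_neg hn, mul_neg_one]
    · rw [abs_of_nonneg (not_lt.mp hn), mul_one]
  · intro t ht
    rw [hev, Finset.sum_eq_zero, mul_zero]
    intro t' ht'
    refine hhdis t' t ?_
    rintro rfl
    obtain ⟨jj, hjj⟩ := hU.mp ht'
    exact ht jj hjj

/-! ### Construction of the array -/

/-- Row indices `J i + 1` along which `m` starts above `μ` and grows so fast that sums of initial
segments are dominated, up to the factor `1 + θ`, by their last term. -/
lemma exists_rows (P : IWParams) {θ : ℝ} (hθ : 0 < θ) (μ : ℝ) :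
    ∃ J : ℕ → ℕ, (∀ i, μ ≤ P.m (J i + 1)) ∧
      ∀ (k w : ℕ), ∑ i ∈ (Finset.univ : Finset (Fin k)).filter (fun i : Fin k => P.m (J i + 1) ≤ w),
        (P.m (J i + 1) : ℝ) ≤ (1 + θ) * w := by
  classical
  have hex : ∀ B : ℝ, ∃ j, B ≤ P.m (j + 1) := by
    intro B
    obtain ⟨N, hN⟩ := exists_nat_ge B
    refine ⟨N, hN.trans ?_⟩
    have : N + 1 ≤ P.m (N + 1) := P.m_mono.id_le (N + 1)
    exact_mod_cast (Nat.le_succ N).trans this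
  choose φ hφ using hex
  let J : ℕ → ℕ := fun i => Nat.rec (φ μ) (fun _ p => φ (max μ ((1 + θ) / θ * P.m (p + 1)))) i
  have hJs : ∀ i, J (i + 1) = φ (max μ ((1 + θ) / θ * P.m (J i + 1))) := fun _ => rfl
  have hgrow : ∀ i, (1 + θ) * P.m (J i + 1) ≤ θ * P.m (J (i + 1) + 1) := by
    intro i
    have h1 := (le_max_right _ _).trans (hφ (max μ ((1 + θ) / θ * P.m (J i + 1))))
    rw [← hJs] at h1
    rw [div_mul_eq_mul_div, div_le_iff₀ hθ] at h1
    linarith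
  have hsum : ∀ n, ∑ i ∈ Finset.range (n + 1), (P.m (J i + 1) : ℝ) ≤ (1 + θ) * P.m (J n + 1) := by
    intro n
    induction n with
    | zero =>
      have : (0 : ℝ) ≤ P.m (J 0 + 1) := Nat.cast_nonneg _
      simp only [zero_add, Finset.sum_range_one]
      nlinarith
    | succ n ih =>
      rw [Finset.sum_range_succ]
      linarith [hgrow n]
  refine ⟨J, fun i => ?_, fun k w => ?_⟩
  · cases i with
    | zero => exact hφ μ
    | succ i =>
      rw [hJs]
      exact (le_max_left _ _).trans (hφ _)
  · set I := (Finset.univ : Finset (Fin k)).filter (fun i : Fin k => P.m (J i + 1) ≤ w) with hI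
    by_cases hne : I.Nonempty
    · set i0 := I.max' hne
      have hi0 : P.m (J i0 + 1) ≤ w := (Finset.mem_filter.mp (I.max'_mem hne)).2
      have h1 : ∑ i ∈ I, (P.m (J i + 1) : ℝ) ≤
          ∑ i ∈ Finset.range (i0 + 1), (P.m (J i + 1) : ℝ) := by
        refine (Finset.sum_map I Fin.valEmbedding (fun i => (P.m (J i + 1) : ℝ))).symm.trans_le ?_
        refine Finset.sum_le_sum_of_subset_of_nonneg ?_ (fun _ _ _ => Nat.cast_nonneg _)
        intro n hn
        obtain ⟨i, hi, rfl⟩ := Finset.mem_map.mp hn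
        have : i ≤ i0 := I.le_max' i hi
        exact Finset.mem_range.mpr (Nat.lt_succ_of_le this)
      refine h1.trans ((hsum i0).trans ?_)
      exact mul_le_mul_of_nonneg_left (by exact_mod_cast hi0) (by positivity)
    · rw [Finset.not_nonempty_iff_eq_empty.mp hne, Finset.sum_empty]
      positivity

lemma sum_errors_le {δ : ℝ} (hδ : 0 ≤ δ) (k : ℕ) :
    ∑ i : Fin k, δ / 2 * (1 / 2) ^ (i : ℕ) ≤ δ := by
  rw [← Finset.mul_sum, Fin.sum_univ_eq_sum_range (fun i => (1 / 2 : ℝ) ^ i) k]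
  have := sum_geometric_two_le k
  nlinarith

/-- Successive choices: the sets `F p` can be taken successive, with `F p` beyond a prescribed
bound `b p`. -/
lemma exists_successive {α : Type*} (Q : ℕ → Finset ℕ → α → Prop) (b : ℕ → ℕ)
    (h : ∀ p K : ℕ, ∃ F c, (∀ t ∈ F, K ≤ t) ∧ Q p F c) :
    ∃ (F : ℕ → Finset ℕ) (c : ℕ → α), (∀ p, Q p (F p) (c p)) ∧ (∀ p, ∀ t ∈ F p, b p ≤ t) ∧
      ∀ p p', p < p' → ∀ t ∈ F p, ∀ t' ∈ F p', t < t' := by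
  choose G c hG hQ using h
  let st : ℕ → ℕ := fun p => Nat.rec 0 (fun p K => max K ((G p (max K (b p))).sup id + 1)) p
  have hst : ∀ p, st (p + 1) = max (st p) ((G p (max (st p) (b p))).sup id + 1) := fun _ => rfl
  have hmono : Monotone st := monotone_nat_of_le_succ fun p => by
    rw [hst]; exact le_max_left _ _
  refine ⟨fun p => G p (max (st p) (b p)), fun p => c p (max (st p) (b p)), fun p => hQ _ _,
    fun p t ht => (le_max_right _ _).trans (hG _ _ t ht), fun p p' hpp t ht t' ht' => ?_⟩
  have h1 : t ≤ (G p (max (st p) (b p))).sup id := Finset.le_sup (f := id) ht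
  have h2 : st (p + 1) ≤ st p' := hmono hpp
  have h3 : st p' ≤ t' := (le_max_left _ _).trans (hG _ _ t' ht')
  have h4 : (G p (max (st p) (b p))).sup id + 1 ≤ st (p + 1) := by
    rw [hst]; exact le_max_right _ _
  omega

lemma vec_support {z : ℕ → c00} {j : ℕ} {F : Finset ℕ} {c : ℕ → ℝ} {i : ℕ}
    (hi : i ∈ (vec P z j F c).support) : ∃ t ∈ F, i ∈ (z t).support :=
  support_sum_subset F c z (Finsupp.support_smul hi)

/-- The array for `ε ≤ 1`.  Taking the rows with disjoint supports, no relation between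
different rows of indices has to be assumed: it is enough that each `s i` is increasing. -/
theorem exists_array (P : IWParams) (y : ℕ → c00) (hy : IsNormBlockSeq (iwNorm P) y)
    (ε : ℝ) (hε : 0 < ε) (hε1 : ε ≤ 1) :
    ∃ A : ℕ → ℕ → c00,
      (∀ i, (∀ jj, A i jj ∈ Submodule.span ℝ (Set.range y)) ∧
        (∀ jj, (A i jj).support.Nonempty) ∧ ∀ jj, Blocks (A i jj) (A i (jj + 1))) ∧
      ∀ (k l : ℕ) (a : Fin k → Fin l → ℝ) (s : Fin k → Fin l → ℕ), (∀ i, StrictMono (s i)) →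
        (∀ i jj, max k l ≤ s i jj) →
        (⨆ i, ∑ jj, |a i jj|) ≤ iwNorm P (∑ i, ∑ jj, a i jj • A i (s i jj)) ∧
        iwNorm P (∑ i, ∑ jj, a i jj • A i (s i jj)) ≤ (1 + ε) * ⨆ i, ∑ jj, |a i jj| := by
  classical
  have hC : (1 : ℝ) < 1 + ε / 4 := by linarith
  obtain ⟨z, f, W, S, hspan⟩ := exists_fastSeq hy.1 hy.2.1 hy.2.2 hC (by linarith)
  obtain ⟨J, hJμ, hJgeo⟩ := exists_rows P (θ := ε / 8) (by positivity) (16 / ε)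
  let τ : ℕ → ℝ := fun i => ε / 8 / 2 * (1 / 2) ^ i
  have hτ : ∀ i, 0 < τ i := fun i => by positivity
  choose L hL using fun i => exists_isVec hC S (J i) (hτ i)
  -- the vector at place `jj` of row `i` is the one of number `Nat.pair i jj` in the construction
  obtain ⟨F, c, hV, hb, hF⟩ := exists_successive
    (fun p F c => IsVec P (1 + ε / 4) z (J p.unpair.1 + 1) (τ p.unpair.1) (L p.unpair.1) F c)
    (fun p => max (p.unpair.2 + 1) ((Finset.range (p.unpair.2 + 1)).sup L))
    (fun p K => hL p.unpair.1 K)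
  let A : ℕ → ℕ → c00 := fun i jj => vec P z (J i + 1) (F (Nat.pair i jj)) (c (Nat.pair i jj))
  have hV' : ∀ i jj, IsVec P (1 + ε / 4) z (J i + 1) (τ i) (L i) (F (Nat.pair i jj))
      (c (Nat.pair i jj)) := by
    intro i jj
    simpa using hV (Nat.pair i jj)
  have hb1 : ∀ i jj, ∀ t ∈ F (Nat.pair i jj), jj + 1 ≤ t := by
    intro i jj t ht
    have := hb _ t ht
    simp only [Nat.unpair_pair] at this
    exact (le_max_left _ _).trans this
  have hb2 : ∀ i jj, ∀ t ∈ F (Nat.pair i jj), ∀ i' < jj, L i' ≤ t := by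
    intro i jj t ht i' hi'
    have := hb _ t ht
    simp only [Nat.unpair_pair] at this
    exact (Finset.le_sup (f := L) (Finset.mem_range.mpr (by omega))).trans
      ((le_max_right _ _).trans this)
  have hAne : ∀ i jj, (A i jj).support.Nonempty := by
    intro i jj
    obtain ⟨g, w, -, hg, -⟩ := exists_lower S (l := 1) (fun _ => F (Nat.pair i jj))
      (fun _ => c (Nat.pair i jj)) (fun _ => hV' i jj)
      (fun _ t ht => (Nat.succ_le_succ (Nat.zero_le _)).trans (hb1 i jj t ht))
      (fun p p' hpp => absurd hpp (by simp [Subsingleton.elim p p'])) (fun _ => 1)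
    have h1 := hg 0
    rw [one_mul, abs_one] at h1
    obtain ⟨n, -, hn⟩ := ev_ne_zero (f := g) (x := A i jj) (by
      rw [h1]; exact one_ne_zero)
    exact ⟨n, hn⟩
  refine ⟨A, fun i => ⟨fun jj => ?_, hAne i, fun jj => ?_⟩, fun k l a s hs hmax => ⟨?_, ?_⟩⟩
  · exact Submodule.smul_mem _ _ (Submodule.sum_mem _ fun t _ =>
      Submodule.smul_mem _ _ (hspan t))
  · obtain ⟨t, ht, h1⟩ := vec_support (maxSupp_mem (hAne i jj))
    obtain ⟨t', ht', h2⟩ := vec_support (minSupp_mem (hAne i (jj + 1)))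
    exact blocks_lt (blocks_of_lt S.blk
      (hF _ _ (Nat.pair_lt_pair_right i (Nat.lt_succ_self jj)) t ht t' ht')) h1 h2
  · have hnn : 0 ≤ iwNorm P (∑ i, ∑ jj, a i jj • A i (s i jj)) := by
      obtain ⟨w, hw⟩ := memWIW_zero (P := P)
      exact (abs_nonneg _).trans (abs_ev_le_iwNorm hw _)
    refine Real.iSup_le (fun i => ?_) hnn
    obtain ⟨g, w, hg, hval, hoff⟩ := exists_lower S (fun jj => F (Nat.pair i (s i jj)))
      (fun jj => c (Nat.pair i (s i jj))) (fun jj => hV' i (s i jj))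
      (fun jj t ht => by
        have h1 := hb1 _ _ t ht
        have h2 := (le_max_right k l).trans (hmax i jj)
        omega)
      (fun jj jj' hjj t ht t' ht' => hF _ _ (Nat.pair_lt_pair_right _ (hs i hjj)) t ht t' ht')
      (a i)
    have hoff' : ∀ i', i' ≠ i → ∀ jj, ev g (A i' (s i' jj)) = 0 := by
      intro i' hi' jj
      simp only [A]
      rw [ev_vec, Finset.sum_eq_zero, mul_zero]
      intro t ht
      rw [hoff t, mul_zero]
      intro jj' ht'
      have hne : Nat.pair i' (s i' jj) ≠ Nat.pair i (s i jj') := by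
        intro h
        rw [Nat.pair_eq_pair] at h
        exact hi' (Fin.ext h.1)
      rcases lt_or_gt_of_ne hne with hlt | hlt
      · exact absurd (hF _ _ hlt t ht t ht') (lt_irrefl _)
      · exact absurd (hF _ _ hlt t ht' t ht) (lt_irrefl _)
    have hev : ev g (∑ i, ∑ jj, a i jj • A i (s i jj)) = ∑ jj, |a i jj| := by
      rw [map_sum, Finset.sum_eq_single i]
      · rw [ev_sum_smul]
        exact Finset.sum_congr rfl fun jj _ => hval jj
      · intro i' _ hi'
        rw [ev_sum_smul]
        exact Finset.sum_eq_zero fun jj _ => by rw [hoff' i' hi' jj, mul_zero]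
      · intro h
        exact absurd (Finset.mem_univ i) h
    rw [← hev]
    exact ev_le_iwNorm hg _
  · have hM : ∀ i, ∑ jj, |a i jj| ≤ ⨆ i, ∑ jj, |a i jj| := fun i =>
      le_ciSup (f := fun i => ∑ jj, |a i jj|) (Set.finite_range _).bddAbove i
    have hM0 : 0 ≤ ⨆ i, ∑ jj, |a i jj| :=
      Real.iSup_nonneg fun i => Finset.sum_nonneg fun jj _ => abs_nonneg _
    refine iwNorm_le fun g w hg => ?_
    have hev : ev g (∑ i, ∑ jj, a i jj • A i (s i jj)) =
        ∑ i, ∑ jj, a i jj * ev g (A i (s i jj)) := by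
      rw [map_sum]
      exact Finset.sum_congr rfl fun i _ => ev_sum_smul _ _ _ _
    rw [hev]
    refine (le_abs_self _).trans ?_
    refine abs_ev_array_le (δ := ε / 8) (θ := ε / 8) S (by linarith) (by linarith)
      (fun i => J i + 1) (fun i => τ i) (fun i => L i) (fun i jj => F (Nat.pair i (s i jj)))
      (fun i jj => c (Nat.pair i (s i jj))) (fun i jj => hV' i (s i jj)) ?_ (fun i => (hτ i).le)
      (sum_errors_le (by positivity) k) (hJgeo k) (by linarith) ?_ hg a _ hM0 hM
    · intro i i' jj t ht
      have h1 := (le_max_left k l).trans (hmax i jj)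
      exact hb2 i (s i jj) t ht i' (i'.2.trans_le h1)
    · intro i
      have hm : (0 : ℝ) < P.m (J i + 1) := by
        exact_mod_cast zero_lt_two.trans_le (two_le_m P (J i + 1))
      have h1 : (1 + ε) / P.m (J i + 1) ≤ ε / 8 := by
        have := hJμ i
        rw [div_le_iff₀ hε] at this
        rw [div_le_iff₀ hm]
        nlinarith
      nlinarith

end IWArray

/-- Let `Y` be a block subspace of `X_iw` (spanned by the normalized
block sequence `y`) and `ε > 0`.  Then there is an array of block sequences
`(x^{(i)}_j)_j`, `i ∈ ℕ`, in `Y` so that for all `k, l`, scalars `(a_{i,j})` and every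
plegma `(s_i)_{i=1}^k` of `l`-tuples with `min s_1 ≥ max {k, l}`,
`max_i ∑_j |a_{i,j}| ≤ ‖∑_i ∑_j a_{i,j} x^{(i)}_{s_i(j)}‖ ≤ (1+ε) max_i ∑_j |a_{i,j}|`. -/
theorem statement12 (P : IWParams) (y : ℕ → c00) (hy : IsNormBlockSeq (iwNorm P) y)
    (ε : ℝ) (hε : 0 < ε) :
    ∃ A : ℕ → ℕ → c00,
      (∀ i, (∀ jj, A i jj ∈ Submodule.span ℝ (Set.range y)) ∧
        (∀ jj, (A i jj).support.Nonempty) ∧ ∀ jj, Blocks (A i jj) (A i (jj + 1))) ∧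
      ∀ (k l : ℕ) (a : Fin k → Fin l → ℝ) (s : Fin k → Fin l → ℕ),
        IsPlegma k l s → (∀ i jj, max k l ≤ s i jj) →
          (⨆ i, ∑ jj, |a i jj|) ≤ iwNorm P (∑ i, ∑ jj, a i jj • A i (s i jj)) ∧
          iwNorm P (∑ i, ∑ jj, a i jj • A i (s i jj)) ≤ (1 + ε) * ⨆ i, ∑ jj, |a i jj| := by
  obtain ⟨A, hA, h⟩ :=
    IWArray.exists_array P y hy (min ε 1) (lt_min hε one_pos) (min_le_right _ _)
  refine ⟨A, hA, fun k l a s hs hmax =>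
    ⟨(h k l a s hs.1 hmax).1, (h k l a s hs.1 hmax).2.trans ?_⟩⟩
  exact mul_le_mul_of_nonneg_right (by linarith [min_le_left ε 1])
    (Real.iSup_nonneg fun i => Finset.sum_nonneg fun jj _ => abs_nonneg _)
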